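/- arXiv:1304.0745 — 4 statements merged into one kernel-verified Lean document; each statement's English description precedes it below -/
import Mathlib

section
/- Let R be a polynomial ring over an algebraically closed field K and let I be an ideal of R of height two minimally generated by n quadrics. If some minimal prime of I is a linear prime, i.e., is generated by two linearly independent linear forms, then pd(R/I) ≤ 2n − 2. -/
open MvPolynomial Filter

universe u

/-- `PdLE R n M` means the `R`-module `M` has projective dimension at most `n`:
either `M` is projective (`n = 0`), or `M` is a quotient of a free module by a
submodule of projective dimension at most `n - 1`. -/
def PdLE (R : Type u) [CommRing R] : ℕ → (M : Type u) → [AddCommGroup M] → [Module R M] → Prop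
  | 0, M, _, _ => Module.Projective R M
  | n + 1, M, _, _ => ∃ (F : Type u) (_ : AddCommGroup F) (_ : Module R F),
      Module.Free R F ∧ ∃ f : F →ₗ[R] M, Function.Surjective f ∧ PdLE R n (LinearMap.ker f)

/-- The projective dimension of an `R`-module `M`, as an element of `ℕ∞`
(`⊤` if `M` has no finite free resolution). -/
noncomputable def projDim (R : Type u) [CommRing R] (M : Type u) [AddCommGroup M]
    [Module R M] : ℕ∞ :=
  sInf ((fun n : ℕ => (n : ℕ∞)) '' {n : ℕ | PdLE R n M})

/-- The height of an ideal: the infimum of the heights of the prime ideals containing it. -/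
noncomputable def idealHeight {R : Type*} [CommRing R] (I : Ideal R) : ℕ∞ :=
  ⨅ p ∈ {p : PrimeSpectrum R | I ≤ p.asIdeal}, Order.height p

/-- The length of a module, defined as the Krull dimension of its lattice of submodules. -/
noncomputable def moduleLength (R : Type u) [CommRing R] (M : Type u) [AddCommGroup M]
    [Module R M] : WithBot ℕ∞ :=
  Order.krullDim (Submodule R M)

/-- `IsHSMultiplicity R mx I e` asserts that the Hilbert–Samuel multiplicity of `R/I`
with respect to the ideal `mx` equals `e`: for `d = dim R/I` there is a polynomial `P`
of degree `d` with `e = d! · (leading coefficient of P)` such that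
`length (R/(I + mx^n)) = P(n)` for all large `n`. -/
def IsHSMultiplicity (R : Type u) [CommRing R] (mx I : Ideal R) (e : ℕ) : Prop :=
  ∃ (d : ℕ) (P : Polynomial ℚ),
    ringKrullDim (R ⧸ I) = (d : WithBot ℕ∞) ∧
    P.natDegree = d ∧
    (e : ℚ) = P.leadingCoeff * d.factorial ∧
    ∀ᶠ n : ℕ in Filter.atTop, ∃ k : ℕ, (k : ℚ) = P.eval (n : ℚ) ∧
      moduleLength R (R ⧸ (I ⊔ mx ^ n)) = ((k : ℕ∞) : WithBot ℕ∞)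

/-- A matrix over a `K`-algebra is `1`-generic if it has no generalized zero entry:
for every nonzero vectors `u`, `v` of scalars, `uᵀ M v ≠ 0`. -/
def OneGeneric (K : Type*) [Field K] {R : Type u} [CommRing R] [Algebra K R]
    {m l : ℕ} (M : Matrix (Fin m) (Fin l) R) : Prop :=
  ∀ (u : Fin m → K) (v : Fin l → K), u ≠ 0 → v ≠ 0 →
    ∑ i, ∑ j, algebraMap K R (u i * v j) * M i j ≠ 0

/-- The ideal of all `2 × 2` minors of a `2 × l` matrix. -/
def minors2 {R : Type u} [CommRing R] {l : ℕ} (M : Matrix (Fin 2) (Fin l) R) : Ideal R :=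
  Ideal.span (Set.range fun p : Fin l × Fin l => M 0 p.1 * M 1 p.2 - M 0 p.2 * M 1 p.1)

/-- The homogeneous maximal ideal of a polynomial ring. -/
noncomputable def maxIdeal (K : Type*) [Field K] (σ : Type*) : Ideal (MvPolynomial σ K) :=
  Ideal.span (Set.range (X : σ → MvPolynomial σ K))

/-- The ideal represented by minors by the `2 × (n+1)` matrix with first column `(x, y)ᵀ`
and remaining columns `(u j, v j)ᵀ`: it is generated by the `2 × 2` minors involving
the first column. -/
def repByMinors {R : Type u} [CommRing R] {n : ℕ} (x y : R) (u v : Fin n → R) : Ideal R :=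
  Ideal.span (Set.range fun j : Fin n => x * v j - y * u j)

/-! Let `(x, y)` be the linear prime and write the quadrics as minors `g j = x * v j - y * u j` with
linear forms `u j`, `v j`. The kernel of `(p, q) ↦ x * q - y * p` is generated by `(x, y)`, so there
is an exact sequence `0 → S² / Q → S / I → S / (x, y) → 0`, where `Q` is generated by the `n + 1`
columns `(x, y)`, `(u j, v j)`. Hence for `n ≥ 3` it suffices that `S² / Q` has projective dimension
at most `2 m - 4` for every module `Q` generated by `m ≥ 4` columns of linear forms. For `n = 2` the
syzygies of a pair of elements of a factorial ring are free of rank one.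

The bounds `2 m - e` for an `m`-dimensional space `E` of columns are proved by induction on
`e ≤ min m 4`. If the entries span at most `2 m - e` linear forms, then `S² / Q` is defined over a
polynomial ring in so many variables and Hilbert's syzygy theorem applies. Otherwise, among any
four scalars there is a `c` such that `(v, c v) ∈ E` implies `(0, v) ∈ E`; subtracting `c` times
the first row from the second, we may assume that `(v, 0) ∈ E` implies `(0, v) ∈ E`, and this
property passes from `E` to `Q`. There is a column `τ` whose first entry is a variable `t` not
occurring in any second entry; let `F` be the space of the columns without `t` and `P` the module
it generates. Comparing coefficients of powers of `t` shows that `f τ ∈ P` if and only if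
`(f, 0) ∈ P`. So `P : τ` is the kernel of `S → S² / P`, `f ↦ (f, 0)`, whose cokernel is the
quotient of `S` by linear forms, and the bound `2 (m - 1) - (e - 1)` for `S² / P` gives the bound
`2 m - e` for `S² / Q`. -/

open CategoryTheory TensorProduct Module

universe v

/-- The `R`-module `M` has projective dimension at most `n`, in the sense of Mathlib's
`HasProjectiveDimensionLE` for the category of modules; an unbundled form of it, for which exact
sequences are given by linear maps. -/
def HasPdLE (R : Type u) [CommRing R] (n : ℕ) (M : Type u) [AddCommGroup M] [Module R M] : Prop :=
  HasProjectiveDimensionLE (ModuleCat.of R M) n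

namespace HasPdLE

variable {R : Type u} [CommRing R] {n m : ℕ} {A B C : Type u} [AddCommGroup A] [Module R A]
  [AddCommGroup B] [Module R B] [AddCommGroup C] [Module R C]

lemma mono (h : HasPdLE R n A) (hnm : n ≤ m) : HasPdLE R m A :=
  haveI : HasProjectiveDimensionLT (ModuleCat.of R A) (n + 1) := h
  hasProjectiveDimensionLT_of_ge _ (n + 1) (m + 1) (by lia)

lemma of_linearEquiv (e : A ≃ₗ[R] B) (h : HasPdLE R n A) : HasPdLE R n B :=
  haveI : HasProjectiveDimensionLT (ModuleCat.of R A) (n + 1) := h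
  hasProjectiveDimensionLT_of_iso e.toModuleIso (n + 1)

lemma zero_iff : HasPdLE R 0 A ↔ Projective R A := by
  rw [HasPdLE, ← projective_iff_hasProjectiveDimensionLE_zero, ← IsProjective.iff_projective]

lemma of_projective [Projective R A] (n : ℕ) : HasPdLE R n A :=
  (zero_iff.2 ‹_›).mono n.zero_le

section ExactSequence

variable {f : A →ₗ[R] B} {g : B →ₗ[R] C} (hf : Function.Injective f)
  (hg : Function.Surjective g) (hfg : Function.Exact f g)

include hf hg hfg

lemma middle (hA : HasPdLE R n A) (hC : HasPdLE R n C) : HasPdLE R n B :=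
  (ModuleCat.shortComplex_shortExact
    (ModuleCat.shortComplexOfCompEqZero f g hfg.linearMap_comp_eq_zero)
      hfg hf hg).hasProjectiveDimensionLT_X₂ (n + 1) hA hC

lemma right (hA : HasPdLE R n A) (hB : HasPdLE R (n + 1) B) : HasPdLE R (n + 1) C :=
  (ModuleCat.shortComplex_shortExact
    (ModuleCat.shortComplexOfCompEqZero f g hfg.linearMap_comp_eq_zero)
      hfg hf hg).hasProjectiveDimensionLT_X₃ (n + 1) hA hB

lemma left (hB : HasPdLE R n B) (hC : HasPdLE R (n + 1) C) : HasPdLE R n A :=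
  (ModuleCat.shortComplex_shortExact
    (ModuleCat.shortComplexOfCompEqZero f g hfg.linearMap_comp_eq_zero)
      hfg hf hg).hasProjectiveDimensionLT_X₁ (n + 1) hB hC

end ExactSequence

lemma ker [Projective R A] {f : A →ₗ[R] B} (hf : Function.Surjective f)
    (h : HasPdLE R (n + 1) B) : HasPdLE R n (LinearMap.ker f) :=
  left (LinearMap.ker f).subtype_injective hf (LinearMap.exact_subtype_ker_map f)
    (of_projective n) h

lemma quotient {P : Submodule R A} (hP : HasPdLE R n P) (hA : HasPdLE R (n + 1) A) :
    HasPdLE R (n + 1) (A ⧸ P) :=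
  right P.subtype_injective P.mkQ_surjective (LinearMap.exact_subtype_mkQ P) hP hA

lemma pdLE (h : HasPdLE R n A) : PdLE R n A := by
  induction n generalizing A with
  | zero => exact zero_iff.1 h
  | succ n ih =>
    have hsurj := Finsupp.linearCombination_id_surjective R A
    exact ⟨A →₀ R, inferInstance, inferInstance, inferInstance, _, hsurj, ih (ker hsurj h)⟩

lemma projDim_le (h : HasPdLE R n A) : projDim R A ≤ n :=
  sInf_le ⟨n, h.pdLE, rfl⟩

lemma baseChange {S : Type (max u v)} [CommRing S] [Algebra R S] [Flat R S]
    (h : HasPdLE R n A) : HasPdLE S n (S ⊗[R] A) := by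
  induction n generalizing A with
  | zero =>
    rw [zero_iff] at h ⊢
    infer_instance
  | succ n ih =>
    obtain ⟨f, hf⟩ : ∃ f : (A →₀ R) →ₗ[R] A, Function.Surjective f :=
      ⟨_, Finsupp.linearCombination_id_surjective R A⟩
    have hi : Function.Injective ((LinearMap.ker f).subtype.baseChange S) :=
      Flat.lTensor_preserves_injective_linearMap _ (LinearMap.ker f).subtype_injective
    have hexact : Function.Exact ((LinearMap.ker f).subtype.baseChange S) (f.baseChange S) := by
      rw [LinearMap.baseChange_eq_ltensor, LinearMap.baseChange_eq_ltensor]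
      exact lTensor_exact (M := LinearMap.ker f) S (LinearMap.exact_subtype_ker_map f) hf
    exact right hi (LinearMap.lTensor_surjective S hf) hexact (ih (ker hf h)) (of_projective _)

lemma quotient_span_image {S : Type (max u v)} [CommRing S] [Algebra R S] [Flat R S]
    {N : Type (max u v)} [AddCommGroup N] [Module R N] [Module S N] [IsScalarTower R S N]
    {f : A →ₗ[R] N} (hf : IsBaseChange S f) (T : Set A)
    (h : HasPdLE R n (A ⧸ Submodule.span R T)) :
    HasPdLE S n (N ⧸ Submodule.span S (f '' T)) := by
  let P := Submodule.span R T
  have hmap : (LinearMap.range (P.subtype.baseChange S)).map hf.equiv.toLinearMap =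
      Submodule.span S (f '' T) := by
    change (P.baseChange S).map _ = _
    rw [Submodule.baseChange_span, Submodule.map_span, Set.image_image]
    simp [hf.equiv_tmul]
  exact of_linearEquiv (AlgebraTensorModule.tensorQuotientEquiv S R S P ≪≫ₗ
    Submodule.Quotient.equiv _ _ hf.equiv hmap) h.baseChange

end HasPdLE

section HilbertSyzygy

open scoped Polynomial

/-- The commutative ring `R` has global dimension at most `n`: this is what Hilbert's syzygy
theorem provides for polynomial rings. -/
def GlobalDimLE (R : Type u) [CommRing R] (n : ℕ) : Prop :=
  ∀ (M : Type u) [AddCommGroup M] [Module R M], HasPdLE R n M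

lemma GlobalDimLE.of_field (K : Type u) [Field K] : GlobalDimLE K 0 :=
  fun _ _ _ => HasPdLE.of_projective 0

attribute [local instance] RingHomInvPair.of_ringEquiv in
lemma GlobalDimLE.of_ringEquiv {R S : Type u} [CommRing R] [CommRing S] (e : R ≃+* S) {n : ℕ}
    (h : GlobalDimLE R n) : GlobalDimLE S n := by
  intro M _ _
  let _ : Module R M := Module.compHom M (e : R →+* S)
  have hM : HasProjectiveDimensionLE (ModuleCat.of R M) n := h M
  let id' : (ModuleCat.of R M) ≃ₛₗ[RingHomClass.toRingHom e] (ModuleCat.of S M) :=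
    { AddEquiv.refl M with map_smul' := fun _ _ => rfl }
  exact ModuleCat.hasProjectiveDimensionLE_of_semiLinearEquiv e id' n

variable (A : Type u) [CommRing A] (M : Type u) [AddCommGroup M] [Module A[X] M] [Module A M]
  [IsScalarTower A A[X] M]

/-- The map `X ⊗ 1 - 1 ⊗ X`, the first map of the characteristic sequence
`0 → A[X] ⊗ M → A[X] ⊗ M → M → 0` of an `A[X]`-module `M`. -/
noncomputable def charMap : A[X] ⊗[A] M →ₗ[A[X]] A[X] ⊗[A] M :=
  LinearMap.lsmul A[X] _ Polynomial.X -
    (Algebra.lsmul A A M (Polynomial.X : A[X])).baseChange A[X]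

/-- The `A[X]`-action `f ⊗ m ↦ f • m`, the second map of the characteristic sequence of `M`. -/
noncomputable def actionMap : A[X] ⊗[A] M →ₗ[A[X]] M :=
  (LinearMap.id : M →ₗ[A] M).liftBaseChange A[X]

/-- An `A`-linear contraction of the characteristic sequence of `M`: it sends `X ^ i ⊗ m` to
`∑ X ^ (i - 1 - j) ⊗ X ^ j • m`, the quotient of `X ^ i ⊗ 1 - 1 ⊗ X ^ i` by `X ⊗ 1 - 1 ⊗ X`
applied to `m`. -/
noncomputable def charContraction : A[X] ⊗[A] M →ₗ[A] A[X] ⊗[A] M :=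
  TensorProduct.lift ((Polynomial.basisMonomials A).constr A fun i =>
    ∑ j ∈ Finset.range i, (TensorProduct.mk A A[X] M (Polynomial.X ^ (i - 1 - j))) ∘ₗ
      Algebra.lsmul A A M (Polynomial.X ^ j : A[X]))

variable {M}

lemma actionMap_tmul (f : A[X]) (m : M) : actionMap A M (f ⊗ₜ m) = f • m := by
  simp [actionMap]

lemma charMap_tmul (f : A[X]) (m : M) : charMap A M (f ⊗ₜ m) =
    (Polynomial.X * f) ⊗ₜ m - f ⊗ₜ ((Polynomial.X : A[X]) • m) := by
  simp [charMap, TensorProduct.smul_tmul']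

lemma charContraction_X_pow_tmul (i : ℕ) (m : M) :
    charContraction A M ((Polynomial.X ^ i) ⊗ₜ m) = ∑ j ∈ Finset.range i,
      (Polynomial.X ^ (i - 1 - j) : A[X]) ⊗ₜ[A] ((Polynomial.X ^ j : A[X]) • m) := by
  have hX : (Polynomial.X ^ i : A[X]) = Polynomial.basisMonomials A i := by
    simp [Polynomial.X_pow_eq_monomial]
  rw [charContraction, TensorProduct.lift.tmul, hX, Basis.constr_basis]
  simp only [LinearMap.coe_sum, Finset.sum_apply, LinearMap.comp_apply, Algebra.lsmul_coe,
    TensorProduct.mk_apply]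

omit [Module A[X] M] [IsScalarTower A A[X] M] in
lemma polynomialTensor_hom_ext {N : Type*} [AddCommGroup N] [Module A N]
    {φ ψ : A[X] ⊗[A] M →ₗ[A] N}
    (h : ∀ (i : ℕ) (m : M), φ ((Polynomial.X ^ i) ⊗ₜ m) = ψ ((Polynomial.X ^ i) ⊗ₜ m)) : φ = ψ := by
  refine TensorProduct.ext ((Polynomial.basisMonomials A).ext fun i => LinearMap.ext fun m => ?_)
  simpa [Polynomial.X_pow_eq_monomial] using h i m

lemma charContraction_charMap (z : A[X] ⊗[A] M) : charContraction A M (charMap A M z) = z := by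
  suffices h : charContraction A M ∘ₗ (charMap A M).restrictScalars A = LinearMap.id from
    LinearMap.congr_fun h z
  refine polynomialTensor_hom_ext A fun i m => ?_
  simp only [LinearMap.comp_apply, LinearMap.restrictScalars_apply, charMap_tmul, map_sub,
    ← pow_succ', charContraction_X_pow_tmul, LinearMap.id_apply]
  rw [Finset.sum_range_succ', add_sub_right_comm, pow_zero, one_smul, add_tsub_cancel_right,
    Nat.sub_zero, add_eq_right, sub_eq_zero]
  refine Finset.sum_congr rfl fun j _ => ?_
  rw [← mul_smul, ← pow_succ, Nat.sub_sub, add_comm 1 j]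

lemma charMap_charContraction (z : A[X] ⊗[A] M) :
    charMap A M (charContraction A M z) = z - 1 ⊗ₜ actionMap A M z := by
  suffices h : (charMap A M).restrictScalars A ∘ₗ charContraction A M =
      LinearMap.id - TensorProduct.mk A A[X] M 1 ∘ₗ (actionMap A M).restrictScalars A from
    LinearMap.congr_fun h z
  refine polynomialTensor_hom_ext A fun i m => ?_
  have telescope := Finset.sum_range_sub' (fun j => (Polynomial.X ^ (i - j) : A[X]) ⊗ₜ[A]
    ((Polynomial.X ^ j : A[X]) • m)) i
  simp only [Nat.sub_zero, pow_zero, one_smul, Nat.sub_self] at telescope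
  simp only [LinearMap.comp_apply, LinearMap.restrictScalars_apply, charMap_tmul, map_sum,
    LinearMap.sub_apply, charContraction_X_pow_tmul, LinearMap.id_apply, actionMap_tmul,
    TensorProduct.mk_apply, ← telescope]
  refine Finset.sum_congr rfl fun j hj => ?_
  have hj := Finset.mem_range.1 hj
  rw [show i - j = i - 1 - j + 1 by lia, show i - (j + 1) = i - 1 - j by lia]
  simp only [pow_succ', mul_smul]

lemma actionMap_charMap (z : A[X] ⊗[A] M) : actionMap A M (charMap A M z) = 0 := by
  suffices h : (actionMap A M ∘ₗ charMap A M).restrictScalars A = 0 from LinearMap.congr_fun h z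
  refine polynomialTensor_hom_ext A fun i m => ?_
  simp [charMap_tmul, actionMap_tmul, mul_smul, smul_comm (Polynomial.X ^ i : A[X])]

lemma exact_charMap_actionMap : Function.Exact (charMap A M) (actionMap A M) := by
  refine fun z => ⟨fun hz => ⟨charContraction A M z, ?_⟩, ?_⟩
  · rw [charMap_charContraction, hz, tmul_zero, sub_zero]
  · rintro ⟨w, rfl⟩
    exact actionMap_charMap A w

variable {A}

lemma GlobalDimLE.polynomial {n : ℕ} (h : GlobalDimLE A n) : GlobalDimLE A[X] (n + 1) := by
  intro M _ _
  let _ : Module A M := Module.compHom M (Polynomial.C : A →+* A[X])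
  have _ : IsScalarTower A A[X] M := ⟨fun a f m => by
    rw [Polynomial.smul_eq_C_mul, mul_smul]; rfl⟩
  have hT : HasPdLE A[X] n (A[X] ⊗[A] M) := (h M).baseChange
  exact HasPdLE.right (Function.LeftInverse.injective (charContraction_charMap A))
    (fun m => ⟨1 ⊗ₜ m, by rw [actionMap_tmul, one_smul]⟩) (exact_charMap_actionMap A)
    hT (hT.mono n.le_succ)

lemma GlobalDimLE.mvPolynomial (K : Type u) [Field K] (n : ℕ) :
    GlobalDimLE (MvPolynomial (Fin n) K) n := by
  induction n with
  | zero => exact (of_field K).of_ringEquiv (isEmptyAlgEquiv K (Fin 0)).symm.toRingEquiv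
  | succ n ih => exact ih.polynomial.of_ringEquiv (finSuccEquiv K n).symm.toRingEquiv

end HilbertSyzygy

lemma GlobalDimLE.hasPdLE_quotient_span {R : Type u} [CommRing R] {S : Type (max u v)} [CommRing S]
    [Algebra R S] [Flat R S] {A : Type u} [AddCommGroup A] [Module R A] {N : Type (max u v)}
    [AddCommGroup N] [Module R N] [Module S N] [IsScalarTower R S N] {n : ℕ} (h : GlobalDimLE R n)
    {f : A →ₗ[R] N} (hf : IsBaseChange S f) {T : Set N} (hT : T ⊆ Set.range f) :
    HasPdLE S n (N ⧸ Submodule.span S T) := by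
  rw [← Set.image_preimage_eq_of_subset hT]
  exact HasPdLE.quotient_span_image hf _ (h _)

namespace HasPdLE

variable {R : Type u} [CommRing R] {n : ℕ} {A B C : Type u} [AddCommGroup A] [Module R A]
  [AddCommGroup B] [Module R B] [AddCommGroup C] [Module R C] {f : A →ₗ[R] B} {g : B →ₗ[R] C}
  (hg : Function.Surjective g) {Q : Submodule R B} {P : Submodule R C}
  (hP : P.comap g = Q ⊔ LinearMap.range f)

section InducedSequence

-- The hypothesis `hP` makes `0 → A ⧸ Q.comap f → B ⧸ Q → C ⧸ P → 0` exact.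


lemma injective_mapQ_comap : Function.Injective ((Q.comap f).mapQ Q f le_rfl) := by
  rw [← LinearMap.ker_eq_bot, Submodule.ker_mapQ, Submodule.mkQ_map_self]

include hg in
lemma surjective_mapQ (hQP : Q ≤ P.comap g) : Function.Surjective (Q.mapQ P g hQP) := by
  rw [← LinearMap.range_eq_top, Submodule.range_mapQ, LinearMap.range_eq_top.2 hg,
    Submodule.map_top, Submodule.range_mkQ]

include hP in
lemma exact_mapQ_comap_mapQ (hQP : Q ≤ P.comap g) :
    Function.Exact ((Q.comap f).mapQ Q f le_rfl) (Q.mapQ P g hQP) := by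
  rw [LinearMap.exact_iff, Submodule.ker_mapQ, Submodule.range_mapQ, hP, Submodule.map_sup,
    Submodule.mkQ_map_self, bot_sup_eq]

include hg hP

lemma quotient_left (hB : HasPdLE R n (B ⧸ Q)) (hC : HasPdLE R (n + 1) (C ⧸ P)) :
    HasPdLE R n (A ⧸ Q.comap f) :=
  have hQP : Q ≤ P.comap g := hP ▸ le_sup_left
  left injective_mapQ_comap (surjective_mapQ hg hQP) (exact_mapQ_comap_mapQ hP hQP) hB hC

lemma quotient_middle (hA : HasPdLE R n (A ⧸ Q.comap f)) (hC : HasPdLE R n (C ⧸ P)) :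
    HasPdLE R n (B ⧸ Q) :=
  have hQP : Q ≤ P.comap g := hP ▸ le_sup_left
  middle injective_mapQ_comap (surjective_mapQ hg hQP) (exact_mapQ_comap_mapQ hP hQP) hA hC

lemma quotient_right (hA : HasPdLE R n (A ⧸ Q.comap f)) (hB : HasPdLE R (n + 1) (B ⧸ Q)) :
    HasPdLE R (n + 1) (C ⧸ P) :=
  have hQP : Q ≤ P.comap g := hP ▸ le_sup_left
  right injective_mapQ_comap (surjective_mapQ hg hQP) (exact_mapQ_comap_mapQ hP hQP) hA hB

end InducedSequence

end HasPdLE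

section SymmetricAlgebra

variable {K : Type u} [Field K] {V : Type*} [AddCommGroup V] [Module K V]
  {S : Type (max u v)} [CommRing S] [Algebra K S] {ι : V →ₗ[K] S}

lemma isDomain_of_isSymmetricAlgebra (hι : IsSymmetricAlgebra ι) : IsDomain S :=
  hι.equiv.symm.toMulEquiv.isDomain _

lemma injective_of_isSymmetricAlgebra (hι : IsSymmetricAlgebra ι) : Function.Injective ι := by
  refine (injective_iff_map_eq_zero ι).2 fun v hv => ?_
  refine (Module.forall_dual_apply_eq_zero_iff K v).1 fun θ => ?_
  rw [← hι.lift_eq θ v, hv, map_zero]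

lemma flat_aeval_of_linearIndependent (hι : IsSymmetricAlgebra ι) {κ : Type*} {v : κ → V}
    (hv : LinearIndependent K v) : (aeval (R := K) (ι ∘ v)).toRingHom.Flat := by
  let b : Basis (_ ⊕ κ) K V := (Basis.sumExtend hv).reindex (Equiv.sumComm _ _)
  have hb (i : κ) : b (Sum.inr i) = v i := by
    rw [Basis.reindex_apply, Basis.sumExtend, Basis.reindex_apply, Basis.extend_apply_self]
    rfl
  let e := (sumAlgEquiv K _ κ).symm.trans
    ((SymmetricAlgebra.equivMvPolynomial b).symm.trans hι.equiv)
  have he : aeval (ι ∘ v) = e.toAlgHom.comp (IsScalarTower.toAlgHom K (MvPolynomial κ K) _) := by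
    ext i
    simp [e, MvPolynomial.algebraMap_eq, hb]
  rw [he]
  exact (RingHom.flat_algebraMap_iff.2 inferInstance).comp (.of_bijective e.bijective)

/-- The ideal generated by the linear forms in a subspace `W`, where the linear forms of the
symmetric algebra `S` are the elements `ι v`. -/
def linearIdeal (ι : V →ₗ[K] S) (W : Submodule K V) : Ideal S :=
  Ideal.span (ι '' W)

/-- The submodule of `S × S` generated by the columns `(ι p, ι q)` of linear forms with
`(p, q) ∈ E`. -/
def columnModule (ι : V →ₗ[K] S) (E : Submodule K (V × V)) : Submodule S (S × S) :=
  Submodule.span S (ι.prodMap ι '' E)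

lemma linearIdeal_span (s : Set V) : linearIdeal ι (Submodule.span K s) = Ideal.span (ι '' s) := by
  rw [linearIdeal, ← Submodule.map_coe, Submodule.map_span]
  exact Submodule.span_span_of_tower K S _

lemma columnModule_span (s : Set (V × V)) :
    columnModule ι (Submodule.span K s) = Submodule.span S (ι.prodMap ι '' s) := by
  rw [columnModule, ← Submodule.map_coe, Submodule.map_span, Submodule.span_span_of_tower]

lemma columnModule_sup (E F : Submodule K (V × V)) :
    columnModule ι (E ⊔ F) = columnModule ι E ⊔ columnModule ι F := by
  have hspan : E ⊔ F = Submodule.span K (E ∪ F) := by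
    rw [Submodule.span_union, Submodule.span_eq, Submodule.span_eq]
  rw [hspan, columnModule_span, Set.image_union, Submodule.span_union, columnModule, columnModule]

lemma map_snd_columnModule (E : Submodule K (V × V)) :
    (columnModule ι E).map (LinearMap.snd S S S) =
      linearIdeal ι (E.map (LinearMap.snd K V V)) := by
  rw [columnModule, linearIdeal, Submodule.map_span, Submodule.map_coe, Set.image_image,
    Set.image_image]
  rfl

section ProjectiveDimension

variable (hι : IsSymmetricAlgebra ι) (U : Submodule K V) [FiniteDimensional K U]

include hι

lemma exists_flat_algebra_mvPolynomial : ∃ _ : Algebra (MvPolynomial (Fin (finrank K U)) K) S,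
    Flat (MvPolynomial (Fin (finrank K U)) K) S ∧
      ∀ v ∈ U, ∃ s, algebraMap (MvPolynomial (Fin (finrank K U)) K) S s = ι v := by
  let b := finBasis K U
  have hb : LinearIndependent K (U.subtype ∘ b) := b.linearIndependent.map' _ U.ker_subtype
  let φ := (aeval (R := K) (ι ∘ U.subtype ∘ b)).toRingHom
  have hφ : (aeval (ι ∘ U.subtype ∘ b)).toLinearMap ∘ₗ b.constr K X = ι ∘ₗ U.subtype :=
    b.ext fun i => by simp
  exact ⟨φ.toAlgebra, flat_aeval_of_linearIndependent hι hb,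
    fun v hv => ⟨_, LinearMap.congr_fun hφ ⟨v, hv⟩⟩⟩

lemma hasPdLE_quotient_linearIdeal : HasPdLE S (finrank K U) (S ⧸ linearIdeal ι U) := by
  obtain ⟨_, _, hU⟩ := exists_flat_algebra_mvPolynomial hι U
  refine (GlobalDimLE.mvPolynomial K _).hasPdLE_quotient_span
    (IsBaseChange.linearMap (MvPolynomial (Fin (finrank K U)) K) S) ?_
  rintro _ ⟨v, hv, rfl⟩
  exact hU v hv

lemma hasPdLE_quotient_columnModule {E : Submodule K (V × V)} (hE : E ≤ U.prod U) :
    HasPdLE S (finrank K U) ((S × S) ⧸ columnModule ι E) := by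
  obtain ⟨_, _, hU⟩ := exists_flat_algebra_mvPolynomial hι U
  have hS := IsBaseChange.linearMap (MvPolynomial (Fin (finrank K U)) K) S
  refine (GlobalDimLE.mvPolynomial K _).hasPdLE_quotient_span (hS.prodMap _ _ hS) ?_
  rintro _ ⟨z, hz, rfl⟩
  obtain ⟨s, hs⟩ := hU z.1 (hE hz).1
  obtain ⟨t, ht⟩ := hU z.2 (hE hz).2
  exact ⟨(s, t), Prod.ext hs ht⟩

end ProjectiveDimension

section Prime

variable (hι : IsSymmetricAlgebra ι) (W : Submodule K V)

include hι

lemma exists_algHom_ker_eq_linearIdeal : ∃ φ : S →ₐ[K] S,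
    RingHom.ker φ = linearIdeal ι W ∧ ∀ v, φ (ι v) = 0 ↔ v ∈ W := by
  obtain ⟨s, hs⟩ := LinearMap.exists_rightInverse_of_surjective W.mkQ W.range_mkQ
  let π : V →ₗ[K] V := s ∘ₗ W.mkQ
  have sub_mem (v : V) : v - π v ∈ W := by
    rw [← Submodule.Quotient.eq]
    exact (LinearMap.congr_fun hs (W.mkQ v)).symm
  have π_eq_zero {v : V} : π v = 0 ↔ v ∈ W := by
    refine ⟨fun h => by simpa [h] using sub_mem v, fun hv => ?_⟩
    rw [LinearMap.comp_apply, Submodule.mkQ_apply, (Submodule.Quotient.mk_eq_zero W).2 hv, map_zero]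
  let φ : S →ₐ[K] S := hι.lift (ι ∘ₗ π)
  have φ_apply (v : V) : φ (ι v) = ι (π v) := hι.lift_eq _ v
  have φ_eq_zero (v : V) : φ (ι v) = 0 ↔ v ∈ W := by
    rw [φ_apply, map_eq_zero_iff ι (injective_of_isSymmetricAlgebra hι), π_eq_zero]
  have mk_φ : (Ideal.Quotient.mkₐ K (linearIdeal ι W)).comp φ = Ideal.Quotient.mkₐ K _ := by
    refine hι.algHom_ext (LinearMap.ext fun v =>
      ((Ideal.Quotient.mk_eq_mk_iff_sub_mem _ _).2 ?_).symm)
    change ι v - φ (ι v) ∈ linearIdeal ι W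
    rw [φ_apply, ← map_sub]
    exact Ideal.subset_span ⟨_, sub_mem v, rfl⟩
  refine ⟨φ, le_antisymm (fun f hf => ?_) (Ideal.span_le.2 ?_), φ_eq_zero⟩
  · rw [RingHom.mem_ker] at hf
    have hmk := AlgHom.congr_fun mk_φ f
    rw [AlgHom.comp_apply, hf, map_zero] at hmk
    exact Ideal.Quotient.eq_zero_iff_mem.1 hmk.symm
  · rintro _ ⟨w, hw, rfl⟩
    exact (φ_eq_zero w).2 hw

lemma isPrime_linearIdeal : (linearIdeal ι W).IsPrime := by
  have := isDomain_of_isSymmetricAlgebra hι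
  obtain ⟨φ, hφ, -⟩ := exists_algHom_ker_eq_linearIdeal hι W
  rw [← hφ]
  exact RingHom.ker_isPrime φ

variable {W}

lemma map_mem_linearIdeal_iff {v : V} : ι v ∈ linearIdeal ι W ↔ v ∈ W := by
  obtain ⟨φ, hφ, hφ'⟩ := exists_algHom_ker_eq_linearIdeal hι W
  rw [← hφ, ← hφ', RingHom.mem_ker]

end Prime

end SymmetricAlgebra

/-- A submodule of `M × M` is swap-closed if it contains `(0, m)` whenever it contains `(m, 0)`.
Both a space `E` of columns of linear forms and the module `columnModule ι E` generated by them
are considered. -/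
def SwapClosed {R M : Type*} [Semiring R] [AddCommMonoid M] [Module R M]
    (Q : Submodule R (M × M)) : Prop :=
  ∀ m, (m, 0) ∈ Q → (0, m) ∈ Q

lemma SwapClosed.sup_span_singleton {R : Type*} [CommRing R] {Q : Submodule R (R × R)}
    (hQ : SwapClosed Q) {a b : R}
    (hb : ∀ r, r * b ∈ Q.map (LinearMap.snd R R R) → r ∈ Q.map (LinearMap.snd R R R)) :
    SwapClosed (Q ⊔ Submodule.span R {(a, b)}) := by
  intro f hf
  obtain ⟨q, hq, z, hz, hqz⟩ := Submodule.mem_sup.1 hf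
  obtain ⟨r, rfl⟩ := Submodule.mem_span_singleton.1 hz
  obtain ⟨hq₁, hq₂⟩ : q.1 + r * a = f ∧ q.2 + r * b = 0 := by simpa [Prod.ext_iff] using hqz
  obtain ⟨⟨c, r'⟩, hc, rfl : r' = r⟩ := hb r ⟨-q, Q.neg_mem hq, neg_eq_of_add_eq_zero_right hq₂⟩
  have hswap : (0, b * c + q.1) ∈ Q := by
    refine hQ _ ?_
    convert Q.add_mem (Q.smul_mem b hc) hq using 1
    ext
    · rfl
    · change 0 = b * r' + q.2
      rw [mul_comm, add_comm, hq₂]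
  refine Submodule.mem_sup.2
    ⟨(0, b * c + q.1) + a • (c, r'), Q.add_mem hswap (Q.smul_mem a hc),
      (-c) • (a, b), Submodule.smul_mem _ _ (Submodule.mem_span_singleton_self _), ?_⟩
  ext
  · simp [mul_comm]
  · simp only [Prod.snd_add, Prod.smul_snd, smul_eq_mul, ← hq₁]
    ring

section SwapClosed

variable {K : Type u} [Field K] {V : Type*} [AddCommGroup V] [Module K V]
  {S : Type (max u v)} [CommRing S] [Algebra K S] {ι : V →ₗ[K] S}

lemma swapClosed_columnModule_prod (A : Submodule K V) :
    SwapClosed (columnModule ι (A.prod A)) := by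
  have hle : columnModule ι (A.prod A) ≤ Submodule.prod (linearIdeal ι A) (linearIdeal ι A) := by
    refine Submodule.span_le.2 ?_
    rintro _ ⟨z, hz, rfl⟩
    exact ⟨Ideal.subset_span ⟨z.1, hz.1, rfl⟩, Ideal.subset_span ⟨z.2, hz.2, rfl⟩⟩
  have hinr : linearIdeal ι A ≤ (columnModule ι (A.prod A)).comap (LinearMap.inr S S S) := by
    refine Ideal.span_le.2 ?_
    rintro _ ⟨v, hv, rfl⟩
    exact Submodule.subset_span ⟨(0, v), ⟨A.zero_mem, hv⟩, by simp⟩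
  exact fun f hf => hinr (hle hf).1

lemma swapClosed_columnModule_sup_span_singleton (hι : IsSymmetricAlgebra ι)
    {F : Submodule K (V × V)} (hF : SwapClosed (columnModule ι F)) {z : V × V}
    (hz : z.2 ∈ F.map (LinearMap.snd K V V) → z ∈ F) :
    SwapClosed (columnModule ι (F ⊔ Submodule.span K {z})) := by
  by_cases hz₂ : z.2 ∈ F.map (LinearMap.snd K V V)
  · rwa [sup_eq_left.2 ((Submodule.span_singleton_le_iff_mem z F).2 (hz hz₂))]
  · rw [columnModule_sup, columnModule_span, Set.image_singleton]
    refine hF.sup_span_singleton fun r hr => ?_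
    rw [map_snd_columnModule] at hr ⊢
    exact ((isPrime_linearIdeal hι _).mem_or_mem hr).resolve_right
      (mt (map_mem_linearIdeal_iff hι).1 hz₂)

lemma swapClosed_columnModule (hι : IsSymmetricAlgebra ι) {E : Submodule K (V × V)}
    [FiniteDimensional K E] (hE : SwapClosed E) : SwapClosed (columnModule ι E) := by
  classical
  let A := E.comap (LinearMap.inl K V V)
  have hAE : A.prod A ≤ E := fun z hz => by
    simpa using E.add_mem (show (z.1, 0) ∈ E from hz.1) (hE z.2 hz.2)
  have key (T : Finset (V × V)) (hT : (T : Set (V × V)) ⊆ E) :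
      SwapClosed (columnModule ι (A.prod A ⊔ Submodule.span K T)) := by
    induction T using Finset.induction_on with
    | empty => simpa using swapClosed_columnModule_prod A
    | insert z T _ ih =>
      rw [Finset.coe_insert, Set.insert_subset_iff] at hT
      rw [Finset.coe_insert, Submodule.span_insert, sup_comm (Submodule.span K {z}), ← sup_assoc]
      refine swapClosed_columnModule_sup_span_singleton hι (ih hT.2) ?_
      rintro ⟨w, hw, hwz : w.2 = z.2⟩
      have hzw : z - w ∈ A.prod A := by
        refine ⟨?_, by simp [hwz]⟩
        change (z.1 - w.1, 0) ∈ E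
        rw [← sub_eq_zero.2 hwz.symm]
        exact E.sub_mem hT.1 (sup_le hAE (Submodule.span_le.2 hT.2) hw)
      simpa using Submodule.add_mem _ (Submodule.mem_sup_left hzw) hw
  obtain ⟨T, hT⟩ := (Submodule.fg_iff_finiteDimensional E).2 ‹_›
  have hTE : (T : Set (V × V)) ⊆ E := hT ▸ Submodule.subset_span
  simpa [hT, sup_eq_right.2 hAE] using key T hTE

end SwapClosed

section NewVariable

open scoped Polynomial

lemma SwapClosed.coeff_mem {R : Type*} [CommRing R] {Q : Submodule R (R × R)}
    (hQ : SwapClosed Q) {a : R} {F : R[X]}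
    (hF : ∀ i, ((F * Polynomial.X).coeff i, (F * Polynomial.C a).coeff i) ∈ Q) (i : ℕ) :
    (F.coeff i, 0) ∈ Q := by
  obtain ⟨k, hk⟩ : ∃ k, F.natDegree < k + i := ⟨F.natDegree + 1, by lia⟩
  induction k generalizing i with
  | zero =>
    rw [Polynomial.coeff_eq_zero_of_natDegree_lt (by lia)]
    exact Q.zero_mem
  | succ k ih =>
    have hsucc : (0, F.coeff (i + 1)) ∈ Q := hQ _ (ih (i + 1) (by lia))
    simpa [mul_comm] using Q.sub_mem (hF (i + 1)) (Q.smul_mem a hsucc)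

variable {K : Type u} [Field K] {V : Type*} [AddCommGroup V] [Module K V]
  {S : Type (max u v)} [CommRing S] [Algebra K S] {ι : V →ₗ[K] S} (hι : IsSymmetricAlgebra ι)
  (θ : Dual K V) (t : V)

/-- The expansion of the elements of `S` as polynomials in the linear form `ι t` whose coefficients
involve only linear forms in the kernel of `θ`, where `θ t = 1`. -/
noncomputable def expandAlong : S →ₐ[K] S[X] :=
  hι.lift ((Polynomial.CAlgHom (R := K)).toLinearMap ∘ₗ ι ∘ₗ (LinearMap.id - θ.smulRight t) +
    θ.smulRight Polynomial.X)

lemma expandAlong_apply (v : V) : expandAlong hι θ t (ι v) =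
    Polynomial.C (ι (v - θ v • t)) + θ v • Polynomial.X :=
  hι.lift_eq _ v

lemma eval_expandAlong (f : S) : (expandAlong hι θ t f).eval (ι t) = f := by
  have hcomp : ((Polynomial.aeval (R := S) (ι t)).restrictScalars K).comp (expandAlong hι θ t) =
      AlgHom.id K S := by
    refine hι.algHom_ext (LinearMap.ext fun v => ?_)
    change Polynomial.aeval (ι t) (expandAlong hι θ t (ι v)) = ι v
    simp [expandAlong_apply, Polynomial.aeval_def]
  simpa [Polynomial.aeval_def] using AlgHom.congr_fun hcomp f

lemma coeff_expandAlong_mem_columnModule {E : Submodule K (V × V)}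
    (hE : E ≤ (LinearMap.ker θ).prod (LinearMap.ker θ)) {z : S × S} (hz : z ∈ columnModule ι E)
    (i : ℕ) : ((expandAlong hι θ t z.1).coeff i, (expandAlong hι θ t z.2).coeff i) ∈
      columnModule ι E := by
  induction hz using Submodule.span_induction generalizing i with
  | mem z hz =>
    obtain ⟨w, hw, rfl⟩ := hz
    obtain ⟨hw₁, hw₂⟩ : θ w.1 = 0 ∧ θ w.2 = 0 := hE hw
    simp only [LinearMap.prodMap_apply, expandAlong_apply, hw₁, hw₂, zero_smul, sub_zero, add_zero,
      Polynomial.coeff_C]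
    split_ifs
    · exact Submodule.subset_span ⟨w, hw, rfl⟩
    · exact Submodule.zero_mem _
  | zero =>
    rw [Prod.fst_zero, Prod.snd_zero, map_zero, Polynomial.coeff_zero]
    exact Submodule.zero_mem _
  | add a b _ _ ha hb => simpa using Submodule.add_mem _ (ha i) (hb i)
  | smul r a _ ha =>
    convert Submodule.sum_mem _ fun x (_ : x ∈ Finset.HasAntidiagonal.antidiagonal i) =>
      Submodule.smul_mem _ ((expandAlong hι θ t r).coeff x.1) (ha x.2) using 1
    ext <;> simp [Prod.fst_sum, Prod.snd_sum, Polynomial.coeff_mul]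

variable {θ} {E : Submodule K (V × V)} [FiniteDimensional K E] (hE : SwapClosed E)
  (hEθ : E ≤ (LinearMap.ker θ).prod (LinearMap.ker θ))
  {τ : V × V} (hτ₁ : θ τ.1 = 1) (hτ₂ : θ τ.2 = 0)

include hι hE hEθ hτ₁ hτ₂

lemma smul_mem_columnModule_iff (f : S) :
    f • (ι τ.1, ι τ.2) ∈ columnModule ι E ↔ (f, 0) ∈ columnModule ι E := by
  have hQ := swapClosed_columnModule hι hE
  constructor <;> intro hf
  · have hcoeff := coeff_expandAlong_mem_columnModule hι θ τ.1 hEθ hf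
    simp only [Prod.smul_fst, Prod.smul_snd, smul_eq_mul, map_mul, expandAlong_apply, hτ₁, hτ₂,
      one_smul, sub_self, map_zero, zero_add, zero_smul, sub_zero, add_zero] at hcoeff
    have hsum := Submodule.sum_mem _ fun i
      (_ : i ∈ Finset.range ((expandAlong hι θ τ.1 f).natDegree + 1)) =>
      Submodule.smul_mem _ (ι τ.1 ^ i) (hQ.coeff_mem hcoeff i)
    convert hsum using 1
    ext
    · conv_lhs => rw [← eval_expandAlong hι θ τ.1 f, Polynomial.eval_eq_sum_range]
      simp [Prod.fst_sum, mul_comm]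
    · simp [Prod.snd_sum]
  · simpa [mul_comm] using
      Submodule.add_mem _ (Submodule.smul_mem _ (ι τ.1) hf) (Submodule.smul_mem _ (ι τ.2) (hQ f hf))

lemma hasPdLE_quotient_columnModule_sup_span_singleton {n : ℕ} (hn : finrank K E ≤ n + 1)
    (h : HasPdLE S n ((S × S) ⧸ columnModule ι E)) :
    HasPdLE S (n + 1) ((S × S) ⧸ columnModule ι (E ⊔ Submodule.span K {τ})) := by
  let Q := columnModule ι E
  have hinl : HasPdLE S n (S ⧸ Q.comap (LinearMap.inl S S S)) := by
    refine HasPdLE.quotient_left (g := LinearMap.snd S S S) LinearMap.snd_surjective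
      (P := Q.map (LinearMap.snd S S S)) ?_ h ?_
    · rw [Submodule.comap_map_eq, LinearMap.range_inl]
    · rw [map_snd_columnModule]
      exact (hasPdLE_quotient_linearIdeal.{u, v} hι _).mono
        ((Submodule.finrank_map_le _ _).trans hn)
  have hcomap : Q.comap (LinearMap.toSpanSingleton S _ (ι τ.1, ι τ.2)) =
      Q.comap (LinearMap.inl S S S) :=
    Submodule.ext (smul_mem_columnModule_iff hι hE hEθ hτ₁ hτ₂)
  refine HasPdLE.quotient_right (f := LinearMap.toSpanSingleton S _ (ι τ.1, ι τ.2))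
    (g := LinearMap.id) (Q := Q) Function.surjective_id ?_ (hcomap ▸ hinl) (h.mono n.le_succ)
  rw [Submodule.comap_id, columnModule_sup, columnModule_span, Set.image_singleton,
    LinearMap.range_toSpanSingleton]
  rfl

end NewVariable

section Entries

variable {K V : Type*} [Field K] [AddCommGroup V] [Module K V] {E F : Submodule K (V × V)}
  {W : Submodule K V}

/-- The span of the entries of the columns in `E`. -/
def entries (E : Submodule K (V × V)) : Submodule K V :=
  E.map (LinearMap.fst K V V) ⊔ E.map (LinearMap.snd K V V)

lemma entries_le_iff : entries E ≤ W ↔ E ≤ W.prod W := by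
  rw [entries, sup_le_iff, Submodule.map_le_iff_le_comap, Submodule.map_le_iff_le_comap,
    ← le_inf_iff]
  rfl

lemma le_prod_entries (E : Submodule K (V × V)) : E ≤ (entries E).prod (entries E) :=
  entries_le_iff.1 le_rfl

variable [FiniteDimensional K E]

instance : FiniteDimensional K (entries E) :=
  inferInstanceAs <| FiniteDimensional K
    ↥(E.map (LinearMap.fst K V V) ⊔ E.map (LinearMap.snd K V V))

variable (E) in
lemma finrank_entries_le : finrank K (entries E) ≤ 2 * finrank K E :=
  calc finrank K (entries E)
      ≤ finrank K (E.map (LinearMap.fst K V V)) + finrank K (E.map (LinearMap.snd K V V)) :=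
        Submodule.finrank_add_le_finrank_add_finrank _ _
    _ ≤ finrank K E + finrank K E :=
        add_le_add (Submodule.finrank_map_le _ _) (Submodule.finrank_map_le _ _)
    _ = 2 * finrank K E := (two_mul _).symm

omit [FiniteDimensional K E] in
lemma exists_sup_eq_of_le (h : F ≤ E) : ∃ G, F ⊔ G = E ∧ Disjoint F G := by
  obtain ⟨G, hG⟩ := Submodule.exists_isCompl F
  refine ⟨G ⊓ E, ?_, hG.disjoint.mono_right inf_le_left⟩
  rw [← sup_inf_assoc_of_le G h, hG.sup_eq_top, top_inf_eq]

omit [FiniteDimensional K E] in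
lemma finrank_sup_of_disjoint {M : Type*} [AddCommGroup M] [Module K M] {P Q : Submodule K M}
    [FiniteDimensional K P] [FiniteDimensional K Q] (h : Disjoint P Q) :
    finrank K ↥(P ⊔ Q) = finrank K P + finrank K Q := by
  rw [← Submodule.finrank_sup_add_finrank_inf_eq, h.eq_bot, finrank_bot, add_zero]

lemma finrank_entries_add_le (h : F ≤ E) (hF : F ≤ W.prod W) [FiniteDimensional K W] :
    finrank K (entries E) + 2 * finrank K F ≤ 2 * finrank K E + finrank K W := by
  obtain ⟨G, hFG, hdisj⟩ := exists_sup_eq_of_le h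
  have := Submodule.finiteDimensional_of_le h
  have := Submodule.finiteDimensional_of_le (hFG ▸ le_sup_right : G ≤ E)
  have hrank := hFG ▸ finrank_sup_of_disjoint hdisj
  have hentries : entries E ≤ W ⊔ entries G := by
    rw [entries_le_iff, ← hFG]
    exact sup_le (hF.trans (Submodule.prod_mono le_sup_left le_sup_left))
      ((le_prod_entries G).trans (Submodule.prod_mono le_sup_right le_sup_right))
  have hsum := (Submodule.finrank_mono hentries).trans
    (Submodule.finrank_add_le_finrank_add_finrank W (entries G))
  have hG := finrank_entries_le G
  lia

omit [FiniteDimensional K E]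

lemma linearIndependent_prodMk_smul {k : ℕ} {w : Fin (k + 1) → V} {l : Fin (k + 1) → K}
    (hl : Function.Injective l) (hw : LinearIndependent K (Fin.init w))
    (hlast : w (Fin.last k) ≠ 0) : LinearIndependent K fun i => (w i, l i • w i) := by
  refine linearIndependent_finSucc'.2 ⟨.of_comp (LinearMap.fst K V V) hw, fun hmem => hlast ?_⟩
  obtain ⟨c, hc⟩ := (Submodule.mem_span_range_iff_exists_fun K).1 hmem
  obtain ⟨hc₁, hc₂⟩ : ∑ i, c i • Fin.init w i = w (Fin.last k) ∧
      ∑ i, c i • l i.castSucc • Fin.init w i = l (Fin.last k) • w (Fin.last k) := by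
    simpa [Prod.ext_iff, Prod.fst_sum, Prod.snd_sum, Fin.init] using hc
  have hsum : ∑ i, (c i * (l i.castSucc - l (Fin.last k))) • Fin.init w i = 0 := by
    simp only [mul_sub, sub_smul, Finset.sum_sub_distrib, mul_smul, hc₂]
    simp only [smul_comm _ (l (Fin.last k)), ← Finset.smul_sum, hc₁, sub_self]
  have hc_zero (i) : c i = 0 :=
    (mul_eq_zero.1 (Fintype.linearIndependent_iff.1 hw _ hsum i)).resolve_right
      (sub_ne_zero.2 (hl.ne (Fin.castSucc_lt_last i).ne))
  rw [← hc₁]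
  simp [hc_zero]

lemma mem_of_two_slopes {v : V} {a b : K} (hab : a ≠ b) (ha : (v, a • v) ∈ E)
    (hb : (v, b • v) ∈ E) : (0, v) ∈ E := by
  simpa [← sub_smul, smul_smul, inv_mul_cancel₀ (sub_ne_zero.2 hab)] using
    E.smul_mem (a - b)⁻¹ (E.sub_mem ha hb)

variable [FiniteDimensional K E]

lemma finrank_entries_add_le_of_slopes {k : ℕ} {w : Fin (k + 1) → V} {l : Fin (k + 1) → K}
    (hE : ∀ i, (w i, l i • w i) ∈ E) (hl : Function.Injective l)
    (hw : LinearIndependent K (Fin.init w)) (hlast : w (Fin.last k) ≠ 0) :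
    finrank K (entries E) + 2 * (k + 1) ≤
      2 * finrank K E + finrank K (Submodule.span K (Set.range w)) := by
  let z (i : Fin (k + 1)) : V × V := (w i, l i • w i)
  have hz : finrank K (Submodule.span K (Set.range z)) = k + 1 := by
    rw [finrank_span_eq_card (linearIndependent_prodMk_smul hl hw hlast), Fintype.card_fin]
  have hzw : Submodule.span K (Set.range z) ≤
      (Submodule.span K (Set.range w)).prod (Submodule.span K (Set.range w)) := by
    refine Submodule.span_le.2 (Set.range_subset_iff.2 fun i => ?_)
    have hi : w i ∈ Submodule.span K (Set.range w) := Submodule.subset_span ⟨i, rfl⟩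
    exact ⟨hi, Submodule.smul_mem _ _ hi⟩
  have := FiniteDimensional.span_of_finite K (Set.finite_range w)
  have hbound :=
    finrank_entries_add_le (Submodule.span_le.2 (Set.range_subset_iff.2 hE)) hzw
  rwa [hz] at hbound

-- If all four slopes fail, there are columns `(w i, l i • w i)` with pairwise independent `w i`.
-- All four of them, or the first three if `w 0`, `w 1`, `w 2` are dependent, are linearly
-- independent columns whose entries span too small a space.
lemma exists_slope {l : Fin 4 → K} (hl : Function.Injective l)
    (hE : 2 * finrank K E ≤ finrank K (entries E) + 3) :
    ∃ i, ∀ v, (v, l i • v) ∈ E → (0, v) ∈ E := by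
  by_contra! h
  choose w hw hw' using h
  have ne_zero (i) : w i ≠ 0 := fun hi => hw' i (by rw [hi]; exact E.zero_mem)
  have hinit : Fin.init (Fin.init w) = ![w 0, w 1] := by
    ext i
    fin_cases i <;> rfl
  have indep : LinearIndependent K (Fin.init (Fin.init w)) := by
    refine hinit ▸ (LinearIndependent.pair_iff' (ne_zero 0)).2 fun a ha => ?_
    have ha' : a ≠ 0 := fun h₀ => ne_zero 1 (by rw [← ha, h₀, zero_smul])
    have hw₀ : (w 0, l 1 • w 0) ∈ E := by
      simpa [← ha, smul_comm _ a, ha'] using E.smul_mem a⁻¹ (hw 1)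
    exact hw' 0 (mem_of_two_slopes (hl.ne (by decide)) (hw 0) hw₀)
  by_cases indep₃ : LinearIndependent K (Fin.init w)
  · have hbound := finrank_entries_add_le_of_slopes hw hl indep₃ (ne_zero _)
    have hspan : finrank K (Submodule.span K (Set.range w)) ≤ _ := finrank_range_le_card w
    rw [Fintype.card_fin] at hspan
    lia
  · have hbound := finrank_entries_add_le_of_slopes (fun i => hw i.castSucc)
      (hl.comp (Fin.castSucc_injective 3)) indep (ne_zero _)
    have hspan : finrank K (Submodule.span K (Set.range (Fin.init w))) < _ :=
      (finrank_range_le_card _).lt_of_ne fun hcard =>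
        indep₃ (linearIndependent_iff_card_eq_finrank_span.2 hcard.symm)
    rw [Fintype.card_fin] at hspan
    change finrank K (entries E) + 2 * (2 + 1) ≤
      2 * finrank K E + finrank K (Submodule.span K (Set.range (Fin.init w))) at hbound
    lia

end Entries

/-- The elementary row operation subtracting `c` times the first entry of a column from the
second. -/
def rowShear {R : Type*} [CommRing R] (M : Type*) [AddCommGroup M] [Module R M] (c : R) :
    (M × M) ≃ₗ[R] M × M :=
  .skewProd (.refl R M) (.refl R M) (-c • LinearMap.id)

lemma rowShear_apply {R M : Type*} [CommRing R] [AddCommGroup M] [Module R M] (c : R) (z : M × M) :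
    rowShear M c z = (z.1, z.2 - c • z.1) := by
  simp [rowShear, sub_eq_add_neg]

section MainEstimate

variable {K : Type u} [Field K] {V : Type*} [AddCommGroup V] [Module K V]

lemma entries_le_entries_map_rowShear (c : K) (E : Submodule K (V × V)) :
    entries E ≤ entries (E.map (rowShear V c).toLinearMap) := by
  refine entries_le_iff.2 fun z hz => ?_
  have hcz := le_prod_entries _ (Submodule.mem_map_of_mem (f := (rowShear V c).toLinearMap) hz)
  rw [LinearEquiv.coe_coe, rowShear_apply] at hcz
  exact ⟨hcz.1, by simpa using Submodule.add_mem _ hcz.2 (Submodule.smul_mem _ c hcz.1)⟩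

lemma swapClosed_map_rowShear {c : K} {E : Submodule K (V × V)}
    (h : ∀ v, (v, c • v) ∈ E → (0, v) ∈ E) :
    SwapClosed (E.map (rowShear V c).toLinearMap) := by
  rintro v ⟨z, hz, hzv⟩
  rw [LinearEquiv.coe_coe, rowShear_apply, Prod.mk.injEq, sub_eq_zero] at hzv
  obtain ⟨rfl, hz₂⟩ := hzv
  exact ⟨(0, z.1), h _ (hz₂ ▸ hz), by simp [rowShear_apply]⟩

lemma exists_dual_eq_one {W : Submodule K V} {v : V} (hv : v ∉ W) :
    ∃ θ : Dual K V, θ v = 1 ∧ W ≤ LinearMap.ker θ := by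
  obtain ⟨φ, hφ, hW⟩ := Submodule.exists_le_ker_of_notMem hv
  refine ⟨(φ v)⁻¹ • φ, by simp [hφ], hW.trans fun w hw => ?_⟩
  simp [LinearMap.mem_ker.1 hw]

lemma inf_ker_sup_span_singleton {M : Type*} [AddCommGroup M] [Module K M] {E : Submodule K M}
    {φ : Dual K M} {τ : M} (hτ : τ ∈ E) (hφ : φ τ ≠ 0) :
    E ⊓ LinearMap.ker φ ⊔ Submodule.span K {τ} = E := by
  rw [inf_sup_assoc_of_le _ ((Submodule.span_singleton_le_iff_mem τ E).2 hτ), sup_comm,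
    φ.span_singleton_sup_ker_eq_top hφ, inf_top_eq]

lemma finrank_inf_ker_add_one {M : Type*} [AddCommGroup M] [Module K M] {E : Submodule K M}
    [FiniteDimensional K E] {φ : Dual K M} {τ : M} (hτ : τ ∈ E) (hφ : φ τ ≠ 0) :
    finrank K ↥(E ⊓ LinearMap.ker φ) + 1 = finrank K E := by
  have hdisj : Disjoint (E ⊓ LinearMap.ker φ) (Submodule.span K {τ}) :=
    (Submodule.disjoint_span_singleton' (fun h => hφ (by rw [h, map_zero]))).2 fun h => hφ h.2
  rw [← finrank_span_singleton (K := K) (v := τ) fun h => hφ (by rw [h, map_zero]),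
    ← finrank_sup_of_disjoint hdisj, inf_ker_sup_span_singleton hτ hφ]

variable {S : Type (max u v)} [CommRing S] [Algebra K S] {ι : V →ₗ[K] S}

lemma map_rowShear_columnModule (c : K) (E : Submodule K (V × V)) :
    (columnModule ι E).map (rowShear S (algebraMap K S c)).toLinearMap =
      columnModule ι (E.map (rowShear V c).toLinearMap) := by
  rw [columnModule, columnModule, Submodule.map_span, Submodule.map_coe, Set.image_image,
    Set.image_image]
  simp [rowShear_apply, Algebra.smul_def]

lemma HasPdLE.of_map_rowShear {n : ℕ} (c : K) {E : Submodule K (V × V)}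
    (h : HasPdLE S n ((S × S) ⧸ columnModule ι (E.map (rowShear V c).toLinearMap))) :
    HasPdLE S n ((S × S) ⧸ columnModule ι E) :=
  of_linearEquiv (Submodule.Quotient.equiv _ _ (rowShear S (algebraMap K S c))
    (map_rowShear_columnModule c E)).symm h

variable (hι : IsSymmetricAlgebra ι) {e : ℕ} {E : Submodule K (V × V)} [FiniteDimensional K E]

include hι

lemma hasPdLE_quotient_columnModule_of_swapClosed
    (ih : ∀ F ≤ E, e ≤ finrank K F →
      HasPdLE S (2 * finrank K F - e) ((S × S) ⧸ columnModule ι F))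
    (he : e + 1 ≤ finrank K E) (hentries : 2 * finrank K E < finrank K (entries E) + (e + 1))
    (hE : SwapClosed E) :
    HasPdLE S (2 * finrank K E - (e + 1)) ((S × S) ⧸ columnModule ι E) := by
  obtain ⟨τ, hτ, hτE⟩ : ∃ τ ∈ E, τ.1 ∉ E.map (LinearMap.snd K V V) := by
    by_contra! h
    have hle : entries E ≤ E.map (LinearMap.snd K V V) :=
      entries_le_iff.2 fun z hz => ⟨h z hz, Submodule.mem_map_of_mem hz⟩
    have hrank := (Submodule.finrank_mono hle).trans (Submodule.finrank_map_le _ E)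
    lia
  obtain ⟨θ, hθ, hθE⟩ := exists_dual_eq_one hτE
  replace hθE (z) (hz : z ∈ E) : θ z.2 = 0 := hθE (Submodule.mem_map_of_mem hz)
  let φ : Dual K (V × V) := θ ∘ₗ LinearMap.fst K V V
  have hφ : φ τ ≠ 0 := hθ.trans_ne one_ne_zero
  have hrank := finrank_inf_ker_add_one hτ hφ
  have hF : SwapClosed (E ⊓ LinearMap.ker φ) := fun v hv => ⟨hE v hv.1, map_zero θ⟩
  have hFθ : E ⊓ LinearMap.ker φ ≤ (LinearMap.ker θ).prod (LinearMap.ker θ) :=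
    fun z hz => ⟨hz.2, hθE z hz.1⟩
  have hcol := hasPdLE_quotient_columnModule_sup_span_singleton hι hF hFθ hθ (hθE τ hτ)
    (by lia) (ih _ inf_le_left (by lia))
  rw [inf_ker_sup_span_singleton hτ hφ] at hcol
  exact hcol.mono (by lia)

lemma hasPdLE_quotient_columnModule_two_mul_finrank_sub {l : Fin 4 → K}
    (hl : Function.Injective l) (he : e ≤ 4) (heE : e ≤ finrank K E) :
    HasPdLE S (2 * finrank K E - e) ((S × S) ⧸ columnModule ι E) := by
  induction e generalizing E with
  | zero =>
    exact (hasPdLE_quotient_columnModule.{u, v} hι _ (le_prod_entries E)).mono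
      (finrank_entries_le E)
  | succ e ih =>
    by_cases hentries : finrank K (entries E) ≤ 2 * finrank K E - (e + 1)
    · exact (hasPdLE_quotient_columnModule.{u, v} hι _ (le_prod_entries E)).mono hentries
    obtain ⟨i, hi⟩ := exists_slope (E := E) hl (by lia)
    have hrank : finrank K (E.map (rowShear V (l i)).toLinearMap) = finrank K E :=
      LinearEquiv.finrank_map_eq _ _
    have hmono := Submodule.finrank_mono (entries_le_entries_map_rowShear (l i) E)
    refine HasPdLE.of_map_rowShear (l i) (hrank ▸ hasPdLE_quotient_columnModule_of_swapClosed hι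
      (fun F hF heF => ?_) (by lia) (by lia) (swapClosed_map_rowShear hi))
    have := Submodule.finiteDimensional_of_le hF
    exact ih (by lia) heF

end MainEstimate

section MinorMap

variable {R : Type u} [CommRing R] {a b : R}

/-- The map sending a column `(p, q)` to the minor `a * q - b * p` of the `2 × 2` matrix with
columns `(a, b)` and `(p, q)`. -/
def minorMap (a b : R) : R × R →ₗ[R] R :=
  (LinearMap.toSpanSingleton R R (-b)).coprod (LinearMap.toSpanSingleton R R a)

lemma minorMap_apply (a b : R) (z : R × R) : minorMap a b z = a * z.2 - b * z.1 := by
  simp only [minorMap, LinearMap.coprod_apply, LinearMap.toSpanSingleton_apply, smul_eq_mul]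
  ring

lemma range_minorMap (a b : R) : LinearMap.range (minorMap a b) = Ideal.span {a, b} := by
  rw [minorMap, LinearMap.range_coprod, LinearMap.range_toSpanSingleton,
    LinearMap.range_toSpanSingleton, ← Set.neg_singleton, Submodule.span_neg, sup_comm,
    ← Submodule.span_union]
  rfl

lemma repByMinors_eq_map_minorMap {n : ℕ} (a b : R) (u v : Fin n → R) : repByMinors a b u v =
    (Submodule.span R (Set.range fun j => (u j, v j))).map (minorMap a b) := by
  rw [Submodule.map_span, ← Set.range_comp]
  simp only [Function.comp_def, minorMap_apply]
  rfl

variable [IsDomain R]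

lemma ker_minorMap_mul {d : R} (hd : d ≠ 0) :
    LinearMap.ker (minorMap (d * a) (d * b)) = LinearMap.ker (minorMap a b) := by
  ext z
  simp only [LinearMap.mem_ker, minorMap_apply, mul_assoc, ← mul_sub, mul_eq_zero, hd, false_or]

lemma ker_minorMap (ha : a ≠ 0) (hab : ∀ s, a ∣ s * b → a ∣ s) :
    LinearMap.ker (minorMap a b) = Submodule.span R {(a, b)} := by
  ext ⟨p, q⟩
  simp only [LinearMap.mem_ker, minorMap_apply, Submodule.mem_span_singleton, Prod.smul_mk,
    smul_eq_mul, Prod.mk.injEq]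
  constructor
  · intro h
    obtain ⟨s, rfl⟩ := hab p ⟨q, by linear_combination -h⟩
    exact ⟨s, mul_comm s a, mul_left_cancel₀ ha (by linear_combination -h)⟩
  · rintro ⟨s, rfl, rfl⟩
    ring

lemma hasPdLE_quotient_span_pair_of_ker_minorMap {z : R × R} (hz : z ≠ 0)
    (hker : LinearMap.ker (minorMap a b) = Submodule.span R {z}) :
    HasPdLE R 2 (R ⧸ Ideal.span {a, b}) := by
  have hpdKer : HasPdLE R 0 (LinearMap.ker (minorMap a b)) := hker ▸
    .of_linearEquiv (LinearEquiv.toSpanNonzeroSingleton R _ _ hz) (.of_projective 0)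
  rw [← range_minorMap]
  exact .quotient (.of_linearEquiv (minorMap a b).quotKerEquivRange
    (hpdKer.quotient (.of_projective 1))) (.of_projective 2)

lemma hasPdLE_quotient_span_pair [UniqueFactorizationMonoid R] (a b : R) :
    HasPdLE R 2 (R ⧸ Ideal.span {a, b}) := by
  wlog ha : a ≠ 0 generalizing a b with hwlog
  · by_cases hb : b = 0
    · rw [not_not.1 ha, hb, Set.pair_eq_singleton, Ideal.span_singleton_eq_bot.2 rfl]
      exact .of_linearEquiv (Submodule.quotEquivOfEqBot ⊥ rfl).symm (.of_projective 2)
    · rw [Ideal.span_pair_comm]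
      exact hwlog b a hb
  obtain ⟨a, b, d, hab, rfl, rfl⟩ := UniqueFactorizationMonoid.exists_reduced_factors _ ha b
  have ha₀ := right_ne_zero_of_mul ha
  refine hasPdLE_quotient_span_pair_of_ker_minorMap (z := (a, b))
    (fun h => ha₀ (congrArg Prod.fst h)) ?_
  rw [ker_minorMap_mul (left_ne_zero_of_mul ha), ker_minorMap ha₀ fun s => hab.dvd_of_dvd_mul_right]

omit [IsDomain R] in
lemma hasPdLE_quotient_repByMinors {m n : ℕ} {u v : Fin n → R}
    (hker : LinearMap.ker (minorMap a b) = Submodule.span R {(a, b)})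
    (hcol : HasPdLE R m
      ((R × R) ⧸ Submodule.span R (insert (a, b) (Set.range fun j => (u j, v j)))))
    (hab : HasPdLE R m (R ⧸ Ideal.span {a, b})) : HasPdLE R m (R ⧸ repByMinors a b u v) := by
  have hcomap : Submodule.comap (minorMap a b) (repByMinors a b u v) =
      Submodule.span R (insert (a, b) (Set.range fun j => (u j, v j))) := by
    rw [repByMinors_eq_map_minorMap, Submodule.comap_map_eq, hker, Submodule.span_insert, sup_comm]
  refine HasPdLE.quotient_middle (f := minorMap a b) (g := LinearMap.id) Function.surjective_id
    ?_ ?_ hab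
  · rw [Submodule.comap_id, range_minorMap, eq_comm, sup_eq_right, ← range_minorMap,
      repByMinors_eq_map_minorMap]
    exact LinearMap.map_le_range
  · rwa [hcomap]

end MinorMap

section Core

variable {K : Type u} [Field K] {V : Type*} [AddCommGroup V] [Module K V]
  {S : Type (max u v)} [CommRing S] [Algebra K S] {ι : V →ₗ[K] S}

lemma dvd_of_dvd_mul_of_linearIndependent (hι : IsSymmetricAlgebra ι) {x y : V}
    (hxy : LinearIndependent K ![x, y]) {s : S} (h : ι x ∣ s * ι y) : ι x ∣ s := by
  have hspan : linearIdeal ι (Submodule.span K {x}) = Ideal.span {ι x} := by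
    rw [linearIdeal_span, Set.image_singleton]
  have hy : ι y ∉ Ideal.span {ι x} := by
    rw [← hspan, map_mem_linearIdeal_iff hι]
    intro hy
    obtain ⟨c, hc⟩ := Submodule.mem_span_singleton.1 hy
    exact one_ne_zero (neg_eq_zero.1
      (LinearIndependent.pair_iff.1 hxy c (-1) (by rw [hc, neg_one_smul, add_neg_cancel])).2)
  rw [← Ideal.mem_span_singleton] at h ⊢
  exact ((hspan ▸ isPrime_linearIdeal hι _).mem_or_mem h).resolve_right hy

lemma hasPdLE_quotient_span_columns (hι : IsSymmetricAlgebra ι) {l : Fin 4 → K}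
    (hl : Function.Injective l) {m : ℕ} (hm : 4 ≤ m) (z : Fin m → V × V) :
    HasPdLE S (2 * m - 4) ((S × S) ⧸ Submodule.span S (Set.range (ι.prodMap ι ∘ z))) := by
  let E := Submodule.span K (Set.range z)
  have : FiniteDimensional K E := .span_of_finite K (Set.finite_range z)
  have hE : finrank K E ≤ m := (finrank_range_le_card z).trans_eq (Fintype.card_fin m)
  have hpdE := hasPdLE_quotient_columnModule_two_mul_finrank_sub hι hl (min_le_left 4 _)
    (min_le_right 4 (finrank K E))
  rw [columnModule_span, ← Set.range_comp] at hpdE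
  exact hpdE.mono (by lia)

lemma hasPdLE_quotient_repByMinors_linear (hι : IsSymmetricAlgebra ι) {l : Fin 4 → K}
    (hl : Function.Injective l) {n : ℕ} (hn : 3 ≤ n) {x y : V}
    (hxy : LinearIndependent K ![x, y]) (u v : Fin n → V) :
    HasPdLE S (2 * n - 2) (S ⧸ repByMinors (ι x) (ι y) (ι ∘ u) (ι ∘ v)) := by
  have := isDomain_of_isSymmetricAlgebra hι
  have hx : ι x ≠ 0 := (map_ne_zero_iff ι (injective_of_isSymmetricAlgebra hι)).2 (hxy.ne_zero 0)
  have hker := ker_minorMap hx fun s => dvd_of_dvd_mul_of_linearIndependent hι hxy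
  have hpdxy := hasPdLE_quotient_span_pair_of_ker_minorMap
    (fun h => hx (congrArg Prod.fst h)) hker
  have hpdCol := hasPdLE_quotient_span_columns hι hl (by lia : 4 ≤ n + 1)
    (Fin.cons (x, y) fun j => (u j, v j))
  rw [Set.range_comp, Fin.range_cons, Set.image_insert_eq, ← Set.range_comp] at hpdCol
  exact hasPdLE_quotient_repByMinors hker (hpdCol.mono (by lia)) (hpdxy.mono (by lia))

end Core

section Homogeneous

variable {σ K : Type*}

lemma homogeneousComponent_add_mul_of_isHomogeneous [CommSemiring K] {q : MvPolynomial σ K}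
    {k m : ℕ} (hq : q.IsHomogeneous m) (p : MvPolynomial σ K) :
    homogeneousComponent (k + m) (p * q) = homogeneousComponent k p * q := by
  let := gradedAlgebra (σ := σ) (R := K)
  have h := DirectSum.coe_decompose_mul_add_of_right_mem (homogeneousSubmodule σ K) (i := k)
    (a := p) hq
  rwa [← decomposition.decompose'_apply, ← decomposition.decompose'_apply]

lemma exists_isHomogeneous_eq_mul_sub_mul [CommRing K] {f x y : MvPolynomial σ K} {k m : ℕ}
    (hf : f.IsHomogeneous (k + m)) (hx : x.IsHomogeneous m) (hy : y.IsHomogeneous m)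
    (hmem : f ∈ Ideal.span {x, y}) :
    ∃ u v, u.IsHomogeneous k ∧ v.IsHomogeneous k ∧ f = x * v - y * u := by
  obtain ⟨p, q, rfl⟩ := Ideal.mem_span_pair.1 hmem
  refine ⟨-homogeneousComponent k q, homogeneousComponent k p,
    (homogeneousComponent_isHomogeneous k q).neg, homogeneousComponent_isHomogeneous k p, ?_⟩
  rw [← homogeneousComponent_eq_self hf, map_add, homogeneousComponent_add_mul_of_isHomogeneous hx,
    homogeneousComponent_add_mul_of_isHomogeneous hy]
  ring

lemma isHomogeneous_one_iff_mem_range [CommSemiring K] {f : MvPolynomial σ K} :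
    f.IsHomogeneous 1 ↔
      f ∈ LinearMap.range (Finsupp.linearCombination K (X (R := K) (σ := σ))) := by
  rw [Finsupp.range_linearCombination, ← homogeneousSubmodule_one_eq_span_X,
    mem_homogeneousSubmodule]

lemma isSymmetricAlgebra_linearCombination_X [CommRing K] :
    IsSymmetricAlgebra (Finsupp.linearCombination K (X (R := K) (σ := σ))) := by
  have hX : Finsupp.linearCombination K (X (R := K) (σ := σ)) =
      Finsupp.basisSingleOne.constr K X := by
    refine Finsupp.basisSingleOne.ext fun i => ?_
    rw [Basis.constr_basis, Finsupp.coe_basisSingleOne, Finsupp.linearCombination_single, one_smul]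
  exact hX ▸ SymmetricAlgebra.IsSymmetricAlgebra.mvPolynomial σ Finsupp.basisSingleOne

end Homogeneous

lemma idealHeight_le_height {R : Type*} [CommRing R] {I P : Ideal R} [hP : P.IsPrime] (h : I ≤ P) :
    idealHeight I ≤ P.height :=
  (iInf₂_le (⟨P, hP⟩ : PrimeSpectrum R) h).trans_eq (PrimeSpectrum.height_eq_orderHeight _).symm

lemma idealHeight_span_range_le {R : Type*} [CommRing R] [IsNoetherianRing R] {n : ℕ}
    {g : Fin n → R} {P : Ideal R} (hP : P ∈ (Ideal.span (Set.range g)).minimalPrimes) :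
    idealHeight (Ideal.span (Set.range g)) ≤ n := by
  have := hP.1.1
  calc idealHeight (Ideal.span (Set.range g)) ≤ P.height := idealHeight_le_height hP.1.2
    _ ≤ (Set.range g).ncard :=
      Ideal.height_le_card_of_mem_minimalPrimes_span (Set.finite_range g) hP
    _ ≤ n := by
      rw [← Set.image_univ]
      exact_mod_cast (Set.ncard_image_le Set.finite_univ).trans_eq (by simp [Set.ncard_univ])

theorem stmt6_general {K : Type u} [Field K] (l : Fin 4 ↪ K) {σ : Type v} {n : ℕ} (hn : 2 ≤ n)
    {g : Fin n → MvPolynomial σ K} (hg : ∀ i, (g i).IsHomogeneous 2)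
    {x y : MvPolynomial σ K} (hx : x.IsHomogeneous 1) (hy : y.IsHomogeneous 1)
    (hxy : LinearIndependent K ![x, y]) (hle : Ideal.span (Set.range g) ≤ Ideal.span {x, y}) :
    projDim (MvPolynomial σ K) (MvPolynomial σ K ⧸ Ideal.span (Set.range g)) ≤
      ((2 * n - 2 : ℕ) : ℕ∞) := by
  refine HasPdLE.projDim_le ?_
  obtain rfl | hn3 := hn.eq_or_lt
  · have hpair : Set.range g = {g 0, g 1} := by
      ext
      simp [Fin.exists_fin_two, eq_comm]
    exact hpair ▸ hasPdLE_quotient_span_pair (g 0) (g 1)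
  choose u v hu hv hguv using fun j => exists_isHomogeneous_eq_mul_sub_mul (hg j) hx hy
    (hle (Ideal.subset_span ⟨j, rfl⟩))
  simp only [isHomogeneous_one_iff_mem_range, LinearMap.mem_range] at hx hy hu hv
  obtain ⟨x, rfl⟩ := hx
  obtain ⟨y, rfl⟩ := hy
  choose u hu using hu
  choose v hv using hv
  simp only [← hu, ← hv] at hguv
  rw [funext hguv]
  refine hasPdLE_quotient_repByMinors_linear.{u, v} (S := MvPolynomial σ K)
    isSymmetricAlgebra_linearCombination_X l.injective hn3 ?_ u v
  rw [LinearIndependent.pair_iff] at hxy ⊢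
  exact fun s t h => hxy s t (by rw [← map_smul, ← map_smul, ← map_add, h, map_zero])

/-- over an algebraically closed field, a height two ideal minimally
generated by `n` quadrics having a linear minimal prime (generated by two linearly
independent linear forms) has `pd(R/I) ≤ 2n - 2`. -/
theorem stmt6 (K : Type u) [Field K] [IsAlgClosed K] (N n : ℕ)
    (I : Ideal (MvPolynomial (Fin N) K)) (g : Fin n → MvPolynomial (Fin N) K)
    (hg : ∀ i, (g i).IsHomogeneous 2)
    (hI : I = Ideal.span (Set.range g))
    (hmin : ∀ (k : ℕ) (h : Fin k → MvPolynomial (Fin N) K),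
      I = Ideal.span (Set.range h) → n ≤ k)
    (hht : idealHeight I = 2)
    (x y : MvPolynomial (Fin N) K) (hx : x.IsHomogeneous 1) (hy : y.IsHomogeneous 1)
    (hxy : LinearIndependent K ![x, y])
    (hminp : Ideal.span {x, y} ∈ I.minimalPrimes) :
    projDim (MvPolynomial (Fin N) K) (MvPolynomial (Fin N) K ⧸ I) ≤ ((2 * n - 2 : ℕ) : ℕ∞) := by
  have : Infinite K := IsAlgClosed.instInfinite
  subst hI
  have hn : 2 ≤ n := by exact_mod_cast hht.symm.trans_le (idealHeight_span_range_le hminp)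
  exact stmt6_general (Fin.valEmbedding.trans (Infinite.natEmbedding K)) hn hg hx hy hxy hminp.1.2
end

section
/- Let R be a polynomial ring over an algebraically closed field K. Let I be an ideal minimally generated by n quadrics, contained in a prime ideal (x, y) with x, y linearly independent linear forms, and suppose I is represented by minors by a 2×(n+1) matrix M of linear forms whose first column is (x, y)^T. If M is 1-generic, then pd(R/I) ≤ n. -/
open MvPolynomial Filter

universe u

/-!
Let `c₀ = (x, y), c₁, …, cₙ` be the columns of `M` and `T ⊆ R²` their span. The map
`(a, b) ↦ x b - y a` has kernel `R c₀` and carries `T` onto `I`, so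
`0 → R² / T → R / I → R / (x, y) → 0` is exact and it suffices to bound the projective dimension of
`R² / T`, which is done by adding the columns one at a time. If `T` is the span of a set of columns
not containing `c`, then the annihilator of `c` in `R² / T` is the ideal `N = {r | (r, 0) ∈ T}`,
whichever column `c` is, and `0 → R / N → R² / T → R / (v) → 0` is exact, where `v` runs over the
second entries of the columns spanning `T`.

To compute the annihilator, replace a column `(a, b)` by the polynomial `a - b X` over `R`: a column
lies in `T` if and only if its polynomial lies in the ideal generated by those of the columns
spanning `T`, and modulo this ideal the polynomial of `c` is a nonzerodivisor. For the latter,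
regard the polynomials of the columns as linear forms over `K[X]`. By `1`-genericity they are
linearly independent at every point of the affine line, and `K` is algebraically closed, so they are
part of a basis of the linear forms over `K[X]`.
-/

open CategoryTheory

universe v

section ProjectiveDimension

variable {R : Type u} [CommRing R]

section ShortExact

variable {A B C : Type v} [AddCommGroup A] [AddCommGroup B] [AddCommGroup C]
  [Module R A] [Module R B] [Module R C] {p : Submodule R A} {q : Submodule R B}
  {r : Submodule R C} {f : A →ₗ[R] B} {g : B →ₗ[R] C}

theorem injective_mapQ_of_comap_eq (hp : q.comap f = p) :
    Function.Injective (p.mapQ q f hp.ge) := by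
  rw [← LinearMap.ker_eq_bot, Submodule.ker_mapQ, hp, Submodule.mkQ_map_self]

theorem exact_mapQ_of_comap_eq_range_sup (hpq : p ≤ q.comap f)
    (hr : r.comap g = LinearMap.range f ⊔ q) :
    Function.Exact (p.mapQ q f hpq) (q.mapQ r g (le_sup_right.trans hr.ge)) := by
  rw [LinearMap.exact_iff, Submodule.ker_mapQ, Submodule.range_mapQ, hr, Submodule.map_sup,
    Submodule.mkQ_map_self, sup_bot_eq]

theorem shortExact_mapQ (hp : q.comap f = p) (hr : r.comap g = LinearMap.range f ⊔ q)
    (hg : Function.Surjective g) :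
    (ModuleCat.shortComplexOfCompEqZero (p.mapQ q f hp.ge)
      (q.mapQ r g (le_sup_right.trans hr.ge))
      (exact_mapQ_of_comap_eq_range_sup hp.ge hr).linearMap_comp_eq_zero).ShortExact := by
  have surjective_mapQ : Function.Surjective (q.mapQ r g (le_sup_right.trans hr.ge)) :=
    .of_comp (g := q.mkQ) ((Submodule.mkQ_surjective r).comp hg)
  exact ModuleCat.shortComplex_shortExact _ (exact_mapQ_of_comap_eq_range_sup hp.ge hr)
    (injective_mapQ_of_comap_eq hp) surjective_mapQ

end ShortExact

theorem hasProjectiveDimensionLT_one_quotient_bot (M : Type u) [AddCommGroup M] [Module R M]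
    [Module.Projective R M] :
    HasProjectiveDimensionLT (ModuleCat.of R (M ⧸ (⊥ : Submodule R M))) 1 := by
  rw [← projective_iff_hasProjectiveDimensionLT_one, ← IsProjective.iff_projective]
  exact .of_equiv (Submodule.quotEquivOfEqBot ⊥ rfl).symm

theorem hasProjectiveDimensionLT_quotient_span_insert {M : Type u} [AddCommGroup M] [Module R M]
    {s : Set M} {m : M} {n : ℕ}
    (hcolon : HasProjectiveDimensionLT
      (ModuleCat.of R (R ⧸ (Submodule.span R s).comap (LinearMap.toSpanSingleton R M m))) n)
    (hs : HasProjectiveDimensionLT (ModuleCat.of R (M ⧸ Submodule.span R s)) (n + 1)) :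
    HasProjectiveDimensionLT (ModuleCat.of R (M ⧸ Submodule.span R (insert m s))) (n + 1) := by
  have span_insert_eq : (Submodule.span R (insert m s)).comap LinearMap.id =
      LinearMap.range (LinearMap.toSpanSingleton R M m) ⊔ Submodule.span R s := by
    rw [Submodule.comap_id, LinearMap.range_toSpanSingleton, Submodule.span_insert]
  exact (shortExact_mapQ rfl span_insert_eq Function.surjective_id).hasProjectiveDimensionLT_X₃ n
    hcolon hs

theorem PdLE.of_hasProjectiveDimensionLE {n : ℕ} {M : Type u} [AddCommGroup M] [Module R M]
    (h : HasProjectiveDimensionLE (ModuleCat.of R M) n) : PdLE R n M := by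
  induction n generalizing M with
  | zero =>
    exact (IsProjective.iff_projective M).2 (projective_iff_hasProjectiveDimensionLE_zero _ |>.2 h)
  | succ n ih =>
    let π : (M →₀ R) →ₗ[R] M := Finsupp.linearCombination R id
    have hπ : Function.Surjective π := Finsupp.linearCombination_id_surjective R M
    refine ⟨M →₀ R, inferInstance, inferInstance, inferInstance, π, hπ, ih ?_⟩
    exact ((LinearMap.shortExact_shortComplexKer hπ).hasProjectiveDimensionLT_X₃_iff n
      ((IsProjective.iff_projective _).1 inferInstance)).1 h

end ProjectiveDimension

/-- A family `v` is permutably regular if each member is a nonzerodivisor modulo the ideal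
generated by finitely many other members, that is, if every sequence of members of `v` with
distinct indices is weakly regular. -/
def PermutablyRegular {R ι : Type*} [CommRing R] (v : ι → R) : Prop :=
  ∀ (s : Finset ι) (i : ι), i ∉ s → ∀ r, r * v i ∈ Ideal.span (v '' s) → r ∈ Ideal.span (v '' s)

namespace PermutablyRegular

variable {R : Type u} [CommRing R] {ι : Type*} {v : ι → R}

theorem of_ringEquiv {S : Type*} [CommRing S] (e : R ≃+* S)
    (h : PermutablyRegular fun i => e (v i)) : PermutablyRegular v := by
  have mem_span_iff (s : Finset ι) (r : R) :
      r ∈ Ideal.span (v '' s) ↔ e r ∈ Ideal.span ((fun i => e (v i)) '' s) := by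
    rw [← Set.image_image e v, ← Ideal.map_span, ← Ideal.mem_comap,
      Ideal.comap_map_of_bijective e e.bijective]
  intro s i hi r hr
  rw [mem_span_iff] at hr ⊢
  exact h s i hi _ (by rwa [← map_mul])

theorem eq_zero_of_mul_eq_zero (hv : PermutablyRegular v) (i : ι) {r : R} (hr : r * v i = 0) :
    r = 0 := by
  simpa using hv ∅ i (Finset.notMem_empty i) r (by simp [hr])

theorem hasProjectiveDimensionLT_quotient_span (hv : PermutablyRegular v) (s : Finset ι) :
    HasProjectiveDimensionLT (ModuleCat.of R (R ⧸ Ideal.span (v '' s))) (s.card + 1) := by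
  classical
  induction s using Finset.induction_on with
  | empty =>
    rw [Finset.coe_empty, Set.image_empty, Ideal.span_empty]
    exact hasProjectiveDimensionLT_one_quotient_bot R
  | insert i s hi ih =>
    rw [Finset.card_insert_of_notMem hi]
    have colon_eq : Submodule.comap (LinearMap.toSpanSingleton R R (v i)) (Ideal.span (v '' s)) =
        Ideal.span (v '' s) :=
      le_antisymm (fun r hr => hv s i hi r hr) fun r hr => Ideal.mul_mem_right _ _ hr
    rw [Finset.coe_insert, Set.image_insert_eq]
    refine hasProjectiveDimensionLT_quotient_span_insert (M := R) ?_
      (hasProjectiveDimensionLT_of_ge _ _ _ (Nat.le_succ _))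
    rwa [← Ideal.span, colon_eq]

end PermutablyRegular

theorem hasProjectiveDimensionLT_two_quotient_span_singleton {R : Type u} [CommRing R] [IsDomain R]
    (f : R) : HasProjectiveDimensionLT (ModuleCat.of R (R ⧸ Ideal.span {f})) 2 := by
  by_cases hf : f = 0
  · rw [hf, Ideal.span_singleton_zero]
    have := hasProjectiveDimensionLT_one_quotient_bot (R := R) R
    exact hasProjectiveDimensionLT_of_ge _ 1 _ one_le_two
  · have hreg : PermutablyRegular fun _ : Unit => f := by
      intro s i hi r hr
      have hs : s = ∅ := Finset.eq_empty_of_forall_notMem fun j => by rwa [Subsingleton.elim j i]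
      simpa [hs, hf] using hr
    have hpd := hreg.hasProjectiveDimensionLT_quotient_span {()}
    rwa [Finset.coe_singleton, Set.image_singleton] at hpd

section Columns

open scoped Polynomial

variable {R : Type u} [CommRing R]

/-- The linear polynomial `a - b X` attached to a column `(a, b)`. It encodes the pencil of the two
rows of a matrix: evaluating at `l` the polynomials of all columns gives row `0` minus `l` times
row `1`. -/
noncomputable def pencilForm : R × R →ₗ[R] R[X] :=
  Polynomial.monomial 0 ∘ₗ LinearMap.fst R R R - Polynomial.monomial 1 ∘ₗ LinearMap.snd R R R

theorem pencilForm_apply (p : R × R) :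
    pencilForm p = Polynomial.C p.1 - Polynomial.X * Polynomial.C p.2 := by
  simp [pencilForm, Polynomial.X_mul_C, Polynomial.C_mul_X_eq_monomial]

theorem coeff_zero_pencilForm (p : R × R) : (pencilForm p).coeff 0 = p.1 := by
  simp [pencilForm_apply]

theorem pencilForm_injective : Function.Injective (pencilForm : R × R →ₗ[R] R[X]) :=
  (injective_iff_map_eq_zero _).2 fun p hp => by
    have coeff_eq_zero (k : ℕ) : (pencilForm p).coeff k = 0 := by rw [hp, Polynomial.coeff_zero]
    have h₀ := coeff_eq_zero 0
    have h₁ := coeff_eq_zero 1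
    simp only [pencilForm_apply, Polynomial.coeff_sub, Polynomial.coeff_C_zero,
      Polynomial.mul_coeff_zero, Polynomial.coeff_X_zero, zero_mul, sub_zero,
      Polynomial.coeff_C_succ, Polynomial.coeff_X_mul, zero_sub, neg_eq_zero] at h₀ h₁
    exact Prod.ext h₀ h₁

variable {ι : Type*} {c : ι → R × R}

theorem map_snd_span_image (s : Set ι) :
    (Submodule.span R (c '' s)).map (LinearMap.snd R R R) =
      Ideal.span ((fun i => (c i).2) '' s) := by
  rw [Submodule.map_span, Set.image_image]
  rfl

section RegularSecondRow

variable (hv : PermutablyRegular fun i => (c i).2)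
include hv

theorem zero_mk_mem_span_of_mk_zero_mem_span (s : Finset ι) {a : R}
    (ha : (a, 0) ∈ Submodule.span R (c '' s)) : (0, a) ∈ Submodule.span R (c '' s) := by
  classical
  induction s using Finset.induction_on generalizing a with
  | empty =>
    obtain rfl : a = 0 := by simpa using ha
    exact ha
  | insert i s hi ih =>
    rw [Finset.coe_insert, Set.image_insert_eq] at ha ⊢
    obtain ⟨r, t, ht, hrt⟩ := Submodule.mem_span_insert.1 ha
    obtain ⟨ha₁, ha₂⟩ := Prod.ext_iff.1 hrt
    simp only [Prod.fst_add, Prod.snd_add, Prod.smul_fst, Prod.smul_snd, smul_eq_mul] at ha₁ ha₂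
    have hr : r ∈ Ideal.span ((fun i => (c i).2) '' s) := by
      refine hv s i hi r ?_
      rw [← map_snd_span_image, eq_neg_of_add_eq_zero_left ha₂.symm]
      exact neg_mem (Submodule.mem_map_of_mem ht)
    rw [← map_snd_span_image] at hr
    obtain ⟨t', ht', rfl : t'.2 = r⟩ := hr
    have hswap : (0, t.1 + (c i).2 * t'.1) ∈ Submodule.span R (c '' s) := by
      refine ih ?_
      convert add_mem ht (Submodule.smul_mem _ (c i).2 ht') using 1
      ext
      · rfl
      · simp only [Prod.snd_add, Prod.smul_snd, smul_eq_mul]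
        linear_combination ha₂
    have hle := Submodule.span_mono (R := R) (Set.subset_insert (c i) (c '' s))
    have hci := Submodule.subset_span (R := R) (Set.mem_insert (c i) (c '' s))
    convert sub_mem (add_mem (hle hswap) (Submodule.smul_mem _ (c i).1 (hle ht')))
      (Submodule.smul_mem _ t'.1 hci) using 1
    ext
    · simp [mul_comm]
    · simp only [ha₁, Prod.snd_add, Prod.snd_sub, Prod.smul_snd, smul_eq_mul]
      ring

theorem mem_span_of_sum_mul_pencilForm_eq (s : Finset ι) (d : ℕ) (z : s → R[X]) {p : R × R}
    (hz : ∀ i, ∀ k ≥ d, (z i).coeff k = 0)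
    (hp : ∑ i, z i * pencilForm (c i) = pencilForm p) : p ∈ Submodule.span R (c '' s) := by
  induction d generalizing z p with
  | zero =>
    have hz₀ (i) : z i = 0 := Polynomial.ext fun k => hz i k k.zero_le
    have hp₀ : p = 0 := pencilForm_injective (by simp [← hp, hz₀])
    exact hp₀ ▸ zero_mem _
  | succ d ih =>
    -- Horner step: removing the constant terms of the `z i` leaves a column `(0, b)` whose form is
    -- `X * pencilForm (-b, 0)`, so after division by `X` the induction hypothesis applies.
    let t := ∑ i, (z i).coeff 0 • c i
    have ht : t ∈ Submodule.span R (c '' s) :=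
      sum_mem fun i _ => Submodule.smul_mem _ _ (Submodule.subset_span ⟨i, i.2, rfl⟩)
    have hpt : pencilForm (p - t) = Polynomial.X * ∑ i, (z i).divX * pencilForm (c i) := by
      rw [map_sub, ← hp, map_sum, ← Finset.sum_sub_distrib, Finset.mul_sum]
      refine Finset.sum_congr rfl fun i _ => ?_
      rw [map_smul, Polynomial.smul_eq_C_mul]
      linear_combination -pencilForm (c i) * (z i).X_mul_divX_add
    have fst_eq : (p - t).1 = 0 := by
      rw [← coeff_zero_pencilForm, hpt, Polynomial.mul_coeff_zero, Polynomial.coeff_X_zero,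
        zero_mul]
    have divX_eq : ∑ i, (z i).divX * pencilForm (c i) = pencilForm (-(p - t).2, 0) := by
      refine Polynomial.isRegular_X.left ?_
      beta_reduce
      rw [← hpt, pencilForm_apply, pencilForm_apply, fst_eq]
      simp only [map_neg, map_zero]
      ring
    have hmem : (-(p - t).2, 0) ∈ Submodule.span R (c '' s) :=
      ih _ (fun i k hk => by rw [Polynomial.coeff_divX]; exact hz i _ (by omega)) divX_eq
    convert sub_mem ht (zero_mk_mem_span_of_mk_zero_mem_span hv s hmem) using 1
    ext
    · simpa [sub_eq_zero] using fst_eq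
    · simp

theorem mem_span_iff_pencilForm_mem (s : Finset ι) (p : R × R) :
    p ∈ Submodule.span R (c '' s) ↔
      pencilForm p ∈ Ideal.span ((fun i => pencilForm (c i)) '' s) := by
  constructor
  · intro hp
    induction hp using Submodule.span_induction with
    | mem x hx =>
      obtain ⟨i, hi, rfl⟩ := hx
      exact Ideal.subset_span ⟨i, hi, rfl⟩
    | zero => simp
    | add x y _ _ hx hy => rw [map_add]; exact add_mem hx hy
    | smul r x _ hx => rw [map_smul]; exact Submodule.smul_of_tower_mem _ r hx
  · intro hp
    obtain ⟨z, hz⟩ := Submodule.mem_span_image_finset_iff_exists_fun R[X] |>.1 hp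
    refine mem_span_of_sum_mul_pencilForm_eq hv s
      (Finset.univ.sup fun i => (z i).natDegree + 1) z (fun i k hk => ?_) hz
    have hi := Finset.le_sup (f := fun i => (z i).natDegree + 1) (Finset.mem_univ i)
    exact Polynomial.coeff_eq_zero_of_natDegree_lt (hi.trans hk)

theorem smul_mem_span_iff_mk_zero_mem_span (hl : PermutablyRegular fun i => pencilForm (c i))
    {s : Finset ι} {i : ι} (hi : i ∉ s) (r : R) :
    r • c i ∈ Submodule.span R (c '' s) ↔ (r, 0) ∈ Submodule.span R (c '' s) := by
  have pencilForm_smul : pencilForm (r • c i) = pencilForm (r, 0) * pencilForm (c i) := by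
    simp [pencilForm_apply (r, 0), Polynomial.smul_eq_C_mul]
  rw [mem_span_iff_pencilForm_mem hv, mem_span_iff_pencilForm_mem hv, pencilForm_smul]
  exact ⟨hl s i hi _, fun h => Ideal.mul_mem_right _ _ h⟩

theorem comap_inl_span_eq_bot_of_card_le_one [Nonempty ι] {s : Finset ι} (hs : s.card ≤ 1) :
    (Submodule.span R (c '' s)).comap (LinearMap.inl R R R) = ⊥ := by
  obtain ⟨i, hi⟩ := Finset.card_le_one_iff_subset_singleton.1 hs
  refine (Submodule.eq_bot_iff _).2 fun r hr => ?_
  have hr' : (r, 0) ∈ Submodule.span R {c i} := by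
    refine Submodule.span_mono ?_ hr
    simpa using Set.image_mono (f := c) (Finset.coe_subset.2 hi)
  obtain ⟨a, ha⟩ := Submodule.mem_span_singleton.1 hr'
  have ha₀ : a = 0 := hv.eq_zero_of_mul_eq_zero i (congrArg Prod.snd ha)
  simpa [ha₀, eq_comm] using congrArg Prod.fst ha

theorem hasProjectiveDimensionLT_quotient_comap_inl [Nonempty ι] {s : Finset ι}
    (hs : HasProjectiveDimensionLT (ModuleCat.of R ((R × R) ⧸ Submodule.span R (c '' s)))
      (max 2 s.card)) :
    HasProjectiveDimensionLT
      (ModuleCat.of R (R ⧸ (Submodule.span R (c '' s)).comap (LinearMap.inl R R R)))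
      (max 1 s.card) := by
  obtain hcard | hcard := le_or_gt s.card 1
  · rw [comap_inl_span_eq_bot_of_card_le_one hv hcard, max_eq_left hcard]
    exact hasProjectiveDimensionLT_one_quotient_bot R
  · have comap_snd : Submodule.comap (LinearMap.snd R R R) (Ideal.span ((fun i => (c i).2) '' s)) =
        LinearMap.range (LinearMap.inl R R R) ⊔ Submodule.span R (c '' s) := by
      rw [← map_snd_span_image, Submodule.comap_map_eq, LinearMap.range_inl, sup_comm]
    rw [max_eq_right hcard] at hs
    rw [max_eq_right hcard.le]
    exact (shortExact_mapQ rfl comap_snd Prod.snd_surjective).hasProjectiveDimensionLT_X₁ _ hs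
      (hv.hasProjectiveDimensionLT_quotient_span s)

theorem hasProjectiveDimensionLT_quotient_span_columns
    (hl : PermutablyRegular fun i => pencilForm (c i)) (s : Finset ι) :
    HasProjectiveDimensionLT (ModuleCat.of R ((R × R) ⧸ Submodule.span R (c '' s)))
      (max 2 s.card) := by
  classical
  induction s using Finset.induction_on with
  | empty =>
    have := hasProjectiveDimensionLT_one_quotient_bot (R := R) (R × R)
    rw [Finset.coe_empty, Set.image_empty, Submodule.span_empty]
    exact hasProjectiveDimensionLT_of_ge _ 1 _ (by simp)
  | insert i s hi ih =>
    have : Nonempty ι := ⟨i⟩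
    have colon_eq : (Submodule.span R (c '' s)).comap (LinearMap.toSpanSingleton R (R × R) (c i)) =
        (Submodule.span R (c '' s)).comap (LinearMap.inl R R R) :=
      Submodule.ext (smul_mem_span_iff_mk_zero_mem_span hv hl hi)
    have card_eq : max 2 (insert i s).card = max 1 s.card + 1 := by
      rw [Finset.card_insert_of_notMem hi]
      omega
    rw [Finset.coe_insert, Set.image_insert_eq, card_eq]
    refine hasProjectiveDimensionLT_quotient_span_insert ?_
      (hasProjectiveDimensionLT_of_ge _ (max 2 s.card) _ (by omega))
    rw [colon_eq]
    exact hasProjectiveDimensionLT_quotient_comap_inl hv ih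

end RegularSecondRow

end Columns

section RepByMinors

variable {R : Type u} [CommRing R] {n : ℕ} {x y : R} {u v : Fin n → R}

/-- The map `(a, b) ↦ x b - y a`, which sends the column `(a, b)` to its minor against `(x, y)`. -/
def minorAgainst (x y : R) : R × R →ₗ[R] R :=
  x • LinearMap.snd R R R - y • LinearMap.fst R R R

theorem minorAgainst_apply (x y : R) (p : R × R) : minorAgainst x y p = x * p.2 - y * p.1 :=
  rfl

theorem range_minorAgainst (x y : R) : LinearMap.range (minorAgainst x y) = Ideal.span {x, y} := by
  ext r
  rw [Ideal.mem_span_pair]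
  constructor
  · rintro ⟨p, rfl⟩
    exact ⟨p.2, -p.1, by rw [minorAgainst_apply]; ring⟩
  · rintro ⟨a, b, rfl⟩
    exact ⟨(-b, a), by rw [minorAgainst_apply]; ring⟩

theorem ker_minorAgainst (hxy : PermutablyRegular ![x, y]) :
    LinearMap.ker (minorAgainst x y) = Submodule.span R {(x, y)} := by
  ext p
  rw [LinearMap.mem_ker, minorAgainst_apply, sub_eq_zero, Submodule.mem_span_singleton]
  constructor
  · intro hp
    obtain ⟨r, hr⟩ : ∃ r, r * x = p.1 := by
      simpa [Ideal.mem_span_singleton'] using hxy {0} 1 (by decide) p.1 (by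
        simpa [Ideal.mem_span_singleton'] using ⟨p.2, by linear_combination hp⟩)
    refine ⟨r, Prod.ext hr ?_⟩
    exact sub_eq_zero.1 (hxy.eq_zero_of_mul_eq_zero 0 (by
      simp only [Matrix.cons_val_zero, Prod.smul_mk, smul_eq_mul]
      linear_combination y * hr - hp))
  · rintro ⟨r, rfl⟩
    simp only [Prod.smul_mk, smul_eq_mul]
    ring

/-- The columns of the matrix `M` representing `repByMinors x y u v` by minors. -/
def columns (x y : R) (u v : Fin n → R) (j : Fin (n + 1)) : R × R :=
  ((Fin.cons x u : Fin (n + 1) → R) j, (Fin.cons y v : Fin (n + 1) → R) j)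

theorem map_minorAgainst_span_columns (x y : R) (u v : Fin n → R) :
    (Submodule.span R (Set.range (columns x y u v))).map (minorAgainst x y) =
      repByMinors x y u v := by
  have hcons : minorAgainst x y ∘ columns x y u v = Fin.cons 0 fun j => x * v j - y * u j := by
    ext j
    cases j using Fin.cases <;> simp [minorAgainst_apply, columns, mul_comm]
  rw [Submodule.map_span, ← Set.range_comp, hcons, Fin.range_cons, Submodule.span_insert_zero]
  rfl

theorem hasProjectiveDimensionLE_quotient_repByMinors (hn : 2 ≤ n)
    (hxy : PermutablyRegular ![x, y])
    (hv : PermutablyRegular fun j => (columns x y u v j).2)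
    (hl : PermutablyRegular fun j => pencilForm (columns x y u v j)) :
    HasProjectiveDimensionLE (ModuleCat.of R (R ⧸ repByMinors x y u v)) n := by
  let T := Submodule.span R (Set.range (columns x y u v))
  have map_eq : T.map (minorAgainst x y) = repByMinors x y u v :=
    map_minorAgainst_span_columns x y u v
  have comap_eq : Submodule.comap (minorAgainst x y) (repByMinors x y u v) = T := by
    rw [← map_eq, Submodule.comap_map_eq, ker_minorAgainst hxy, sup_eq_left,
      Submodule.span_singleton_le_iff_mem]
    exact Submodule.subset_span ⟨0, rfl⟩
  have comap_id_eq : Submodule.comap LinearMap.id (Ideal.span {x, y}) =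
      LinearMap.range (minorAgainst x y) ⊔ repByMinors x y u v := by
    rw [Submodule.comap_id, range_minorAgainst, ← map_eq, left_eq_sup, ← range_minorAgainst]
    exact LinearMap.map_le_range
  have hT : HasProjectiveDimensionLT (ModuleCat.of R ((R × R) ⧸ T)) (n + 1) := by
    have h := hasProjectiveDimensionLT_quotient_span_columns hv hl Finset.univ
    rwa [Finset.coe_univ, Set.image_univ, Finset.card_fin, max_eq_right (by omega)] at h
  have hpd : HasProjectiveDimensionLT (ModuleCat.of R (R ⧸ Ideal.span {x, y})) (n + 1) := by
    have h := hxy.hasProjectiveDimensionLT_quotient_span Finset.univ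
    rw [Finset.coe_univ, Set.image_univ, Matrix.range_cons_cons_empty, Finset.card_fin] at h
    exact hasProjectiveDimensionLT_of_ge _ 3 _ (by omega)
  exact (shortExact_mapQ comap_eq comap_id_eq Function.surjective_id).hasProjectiveDimensionLT_X₂ _
    hT hpd

end RepByMinors

section LinearForms

open scoped Polynomial

theorem permutablyRegular_X {A κ ι : Type*} [CommRing A] {f : ι → κ} (hf : Function.Injective f) :
    PermutablyRegular fun i => (X (f i) : MvPolynomial κ A) := by
  intro s i hi r hr
  rw [← Set.image_image X f, mem_ideal_span_X_image] at hr ⊢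
  intro m hm
  obtain ⟨_, ⟨j, hj, rfl⟩, hmj⟩ := hr (m + Finsupp.single (f i) 1) (by
    rwa [mem_support_iff, coeff_mul_X, ← mem_support_iff])
  have hij : f i ≠ f j := fun h => hi (hf h ▸ hj)
  exact ⟨f j, ⟨j, hj, rfl⟩, by simpa [Finsupp.single_apply, hij] using hmj⟩

theorem permutablyRegular_of_isSymmetricAlgebra {A M S ι : Type*} [CommRing A] [AddCommGroup M]
    [Module A M] [CommRing S] [Algebra A S] {f : M →ₗ[A] S} (hf : IsSymmetricAlgebra f) {c : ι → M}
    (hc : LinearIndependent A c) [Module.Free A (M ⧸ Submodule.span A (Set.range c))] :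
    PermutablyRegular fun i => f (c i) := by
  let b := Module.Basis.sumQuot (Module.Basis.span hc)
    (Module.Free.chooseBasis A (M ⧸ Submodule.span A (Set.range c)))
  have hb (i) : b (Sum.inl i) = c i := by simp [b, Module.Basis.span_apply]
  let e := hf.equiv.symm.trans (SymmetricAlgebra.equivMvPolynomial b)
  have he (i) : e (f (c i)) = X (Sum.inl i) := by
    rw [← hb, ← SymmetricAlgebra.equivMvPolynomial_ι_apply b]
    simp [e]
  refine .of_ringEquiv e.toRingEquiv ?_
  convert permutablyRegular_X (A := A) (Sum.inl_injective (α := ι)) using 2 with i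
  exact he i

theorem isSymmetricAlgebra_linearCombination_X_s7 (A σ : Type*) [CommRing A] :
    IsSymmetricAlgebra (Finsupp.linearCombination A (X : σ → MvPolynomial σ A)) := by
  have constr_eq : Finsupp.basisSingleOne.constr A X =
      Finsupp.linearCombination A (X : σ → MvPolynomial σ A) :=
    Finsupp.basisSingleOne.ext fun k : σ => by
      rw [Module.Basis.constr_basis, Finsupp.coe_basisSingleOne, Finsupp.linearCombination_single,
        one_smul]
  exact constr_eq ▸ SymmetricAlgebra.IsSymmetricAlgebra.mvPolynomial σ Finsupp.basisSingleOne

theorem exists_linearCombination_X_eq_of_isHomogeneous {A σ : Type*} [CommRing A]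
    {p : MvPolynomial σ A} (hp : p.IsHomogeneous 1) :
    ∃ a : σ →₀ A, Finsupp.linearCombination A X a = p := by
  rw [← mem_homogeneousSubmodule, homogeneousSubmodule_one_eq_span_X,
    ← Finsupp.range_linearCombination] at hp
  exact hp

theorem permutablyRegular_of_linearIndependent {K σ ι : Type*} [Field K]
    {p : ι → MvPolynomial σ K} (hp : ∀ i, (p i).IsHomogeneous 1) (hli : LinearIndependent K p) :
    PermutablyRegular p := by
  choose a ha using fun i => exists_linearCombination_X_eq_of_isHomogeneous (hp i)
  obtain rfl : (fun i => Finsupp.linearCombination K X (a i)) = p := funext ha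
  exact permutablyRegular_of_isSymmetricAlgebra (isSymmetricAlgebra_linearCombination_X_s7 K σ)
    (hli.of_comp _)

section EvalCoeff

variable {K σ ι : Type*} [Field K]

/-- Evaluation at `l` of the coefficients of a vector over `K[X]`. -/
noncomputable def evalCoeff (l : K) : (σ →₀ K[X]) →ₗ[K] σ →₀ K :=
  Finsupp.mapRange.linearMap (Polynomial.leval l)

theorem evalCoeff_apply (l : K) (m : σ →₀ K[X]) (k : σ) : evalCoeff l m k = (m k).eval l :=
  rfl

theorem evalCoeff_smul (l : K) (f : K[X]) (m : σ →₀ K[X]) :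
    evalCoeff l (f • m) = f.eval l • evalCoeff l m := by
  ext k
  simp [evalCoeff_apply]

theorem evalCoeff_linearCombination (l : K) (c : ι → σ →₀ K[X]) (z : ι →₀ K[X]) :
    evalCoeff l (Finsupp.linearCombination K[X] c z) =
      Finsupp.linearCombination K (fun i => evalCoeff l (c i)) (evalCoeff l z) := by
  induction z using Finsupp.induction_linear with
  | zero => simp
  | add z w hz hw => simp only [map_add, hz, hw]
  | single i f =>
    have evalCoeff_single : evalCoeff l (Finsupp.single i f) = Finsupp.single i (f.eval l) :=
      Finsupp.mapRange_single (hf := map_zero _)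
    rw [evalCoeff_single, Finsupp.linearCombination_single, Finsupp.linearCombination_single,
      evalCoeff_smul]

theorem exists_X_sub_C_smul_eq {l : K} {m : σ →₀ K[X]} (hm : evalCoeff l m = 0) :
    ∃ w : σ →₀ K[X], (Polynomial.X - Polynomial.C l) • w = m := by
  refine ⟨m.mapRange (· /ₘ (Polynomial.X - Polynomial.C l)) (Polynomial.zero_divByMonic _), ?_⟩
  ext1 k
  exact Polynomial.mul_divByMonic_eq_iff_isRoot.2 (DFunLike.congr_fun hm k)

variable {c : ι → σ →₀ K[X]}

theorem mem_span_of_X_sub_C_smul_mem {l : K} (hc : LinearIndependent K fun i => evalCoeff l (c i))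
    {m : σ →₀ K[X]}
    (hm : (Polynomial.X - Polynomial.C l) • m ∈ Submodule.span K[X] (Set.range c)) :
    m ∈ Submodule.span K[X] (Set.range c) := by
  rw [← Finsupp.range_linearCombination] at hm ⊢
  obtain ⟨z, hz⟩ := hm
  have evalCoeff_z : evalCoeff l z = 0 := by
    refine linearIndependent_iff.1 hc _ ?_
    rw [← evalCoeff_linearCombination, hz, evalCoeff_smul]
    simp
  obtain ⟨w, rfl⟩ := exists_X_sub_C_smul_eq evalCoeff_z
  rw [map_smul] at hz
  exact ⟨w, smul_right_injective _ (Polynomial.X_sub_C_ne_zero l) hz⟩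

variable (hc : ∀ l : K, LinearIndependent K fun i => evalCoeff l (c i))
include hc

theorem linearIndependent_of_evalCoeff [Infinite K] : LinearIndependent K[X] c := by
  refine linearIndependent_iff.2 fun z hz => ?_
  have evalCoeff_z (l : K) : evalCoeff l z = 0 :=
    linearIndependent_iff.1 (hc l) _ (by rw [← evalCoeff_linearCombination, hz, map_zero])
  ext1 i
  exact Polynomial.funext fun l => by
    simpa [evalCoeff_apply] using DFunLike.congr_fun (evalCoeff_z l) i

theorem mem_span_of_smul_mem_of_splits {f : K[X]} (hf : f.Splits) (hf₀ : f ≠ 0) {m : σ →₀ K[X]}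
    (hm : f • m ∈ Submodule.span K[X] (Set.range c)) : m ∈ Submodule.span K[X] (Set.range c) := by
  induction hf using Submonoid.closure_induction generalizing m with
  | mem f hf =>
    obtain ⟨a, rfl⟩ | ⟨a, rfl⟩ := hf
    · have ha : IsUnit (Polynomial.C a) := by simpa using hf₀
      exact (Submodule.smul_mem_iff_of_isUnit _ ha).1 hm
    · refine mem_span_of_X_sub_C_smul_mem (hc (-a)) ?_
      rwa [Polynomial.C_neg, sub_neg_eq_add]
  | one => rwa [one_smul] at hm
  | mul f g _ _ ihf ihg =>
    rw [mul_smul] at hm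
    exact ihg (right_ne_zero_of_mul hf₀) (ihf (left_ne_zero_of_mul hf₀) hm)

theorem free_quotient_span_range [IsAlgClosed K] [Finite σ] :
    Module.Free K[X] ((σ →₀ K[X]) ⧸ Submodule.span K[X] (Set.range c)) := by
  have : Module.IsTorsionFree K[X] ((σ →₀ K[X]) ⧸ Submodule.span K[X] (Set.range c)) := by
    refine .of_smul_eq_zero fun f m hfm => or_iff_not_imp_left.2 fun hf => ?_
    induction m using Submodule.Quotient.induction_on with | _ m
    rw [← Submodule.Quotient.mk_smul, Submodule.Quotient.mk_eq_zero] at hfm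
    rw [Submodule.Quotient.mk_eq_zero]
    exact mem_span_of_smul_mem_of_splits hc (IsAlgClosed.splits f) hf hfm
  infer_instance

end EvalCoeff

/-- The exchange of variables `A[x₁, …, x_N][X] ≃ A[X][x₁, …, x_N]`. It turns a pencil of linear
forms over `A` into a linear form over `A[X]`. -/
noncomputable def polynomialMvPolynomialEquiv (A σ : Type*) [CommRing A] :
    (MvPolynomial σ A)[X] ≃ₐ[A] MvPolynomial σ A[X] :=
  (optionEquivLeft A σ).symm.trans (optionEquivRight A σ)

theorem polynomialMvPolynomialEquiv_C_linearCombination {A σ : Type*} [CommRing A] (a : σ →₀ A) :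
    polynomialMvPolynomialEquiv A σ (Polynomial.C (Finsupp.linearCombination A X a)) =
      Finsupp.linearCombination A[X] X (a.mapRange Polynomial.C Polynomial.C_0) := by
  induction a using Finsupp.induction_linear with
  | zero => simp
  | add a b ha hb =>
    rw [map_add, map_add, map_add, ha, hb, Finsupp.mapRange_add (map_add _), map_add]
  | single k r => simp [polynomialMvPolynomialEquiv, smul_eq_C_mul]

theorem polynomialMvPolynomialEquiv_pencilForm {A σ : Type*} [CommRing A] (a b : σ →₀ A) :
    polynomialMvPolynomialEquiv A σ
        (pencilForm (Finsupp.linearCombination A X a, Finsupp.linearCombination A X b)) =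
      Finsupp.linearCombination A[X] X (a.mapRange Polynomial.C Polynomial.C_0 -
        (Polynomial.X : A[X]) • b.mapRange Polynomial.C Polynomial.C_0) := by
  have map_X : polynomialMvPolynomialEquiv A σ Polynomial.X = C Polynomial.X := by
    simp [polynomialMvPolynomialEquiv]
  rw [pencilForm_apply, map_sub, map_mul, map_X, polynomialMvPolynomialEquiv_C_linearCombination,
    polynomialMvPolynomialEquiv_C_linearCombination, map_sub, map_smul, smul_eq_C_mul]

theorem permutablyRegular_pencilForm {K σ ι : Type*} [Field K] [IsAlgClosed K] [Finite σ]
    {u v : ι → MvPolynomial σ K} (hu : ∀ i, (u i).IsHomogeneous 1) (hv : ∀ i, (v i).IsHomogeneous 1)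
    (h : ∀ l : K, LinearIndependent K fun i => u i - l • v i) :
    PermutablyRegular fun i => pencilForm (u i, v i) := by
  choose a ha using fun i => exists_linearCombination_X_eq_of_isHomogeneous (hu i)
  choose b hb using fun i => exists_linearCombination_X_eq_of_isHomogeneous (hv i)
  obtain rfl : (fun i => Finsupp.linearCombination K X (a i)) = u := funext ha
  obtain rfl : (fun i => Finsupp.linearCombination K X (b i)) = v := funext hb
  let c (i : ι) : σ →₀ K[X] := (a i).mapRange Polynomial.C Polynomial.C_0 -
    (Polynomial.X : K[X]) • (b i).mapRange Polynomial.C Polynomial.C_0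
  have evalCoeff_c (l : K) (i : ι) : evalCoeff l (c i) = a i - l • b i := by
    ext k
    simp [c, evalCoeff_apply, mul_comm l]
  have hc (l : K) : LinearIndependent K fun i => evalCoeff l (c i) := by
    refine .of_comp (Finsupp.linearCombination K (X : σ → MvPolynomial σ K)) ?_
    simpa [Function.comp_def, evalCoeff_c] using h l
  have := free_quotient_span_range hc
  refine .of_ringEquiv (polynomialMvPolynomialEquiv K σ).toRingEquiv ?_
  convert permutablyRegular_of_isSymmetricAlgebra (isSymmetricAlgebra_linearCombination_X_s7 K[X] σ)
    (linearIndependent_of_evalCoeff hc) using 2 with i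
  exact polynomialMvPolynomialEquiv_pencilForm (a i) (b i)

end LinearForms

theorem OneGeneric.linearIndependent_rowCombination {K : Type*} [Field K] {R : Type u} [CommRing R]
    [Algebra K R] {m l : ℕ} {M : Matrix (Fin m) (Fin l) R} (hM : OneGeneric K M) {a : Fin m → K}
    (ha : a ≠ 0) : LinearIndependent K fun j => ∑ i, a i • M i j := by
  rw [Fintype.linearIndependent_iff]
  intro b hb
  by_contra! hb₀
  refine hM a b ha (fun h => ?_) ?_
  · simp [h] at hb₀
  · rw [← hb, Finset.sum_comm]
    simp only [Finset.smul_sum, smul_smul, ← Algebra.smul_def, mul_comm (b _)]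

/-- if `I` is minimally generated by `n` quadrics, contained in the prime
`(x, y)`, and represented by minors by a 1-generic `2 × (n+1)` matrix `M` with first
column `(x, y)ᵀ`, then `pd(R/I) ≤ n`. -/
theorem stmt7 (K : Type u) [Field K] [IsAlgClosed K] (N n : ℕ)
    (x y : MvPolynomial (Fin N) K) (hx : x.IsHomogeneous 1) (hy : y.IsHomogeneous 1)
    (hxy : LinearIndependent K ![x, y])
    (hprime : (Ideal.span {x, y}).IsPrime)
    (u v : Fin n → MvPolynomial (Fin N) K)
    (hu : ∀ j, (u j).IsHomogeneous 1) (hv : ∀ j, (v j).IsHomogeneous 1)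
    (I : Ideal (MvPolynomial (Fin N) K))
    (hI : I = repByMinors x y u v)
    (hle : I ≤ Ideal.span {x, y})
    (hmin : ∀ (k : ℕ) (h : Fin k → MvPolynomial (Fin N) K),
      I = Ideal.span (Set.range h) → n ≤ k)
    (h1g : OneGeneric K (Matrix.of ![Fin.cons x u, Fin.cons y v] : Matrix (Fin 2) (Fin (n + 1)) (MvPolynomial (Fin N) K))) :
    projDim (MvPolynomial (Fin N) K) (MvPolynomial (Fin N) K ⧸ I) ≤ (n : ℕ∞) := by
  rw [hI]
  refine sInf_le ⟨n, PdLE.of_hasProjectiveDimensionLE ?_, rfl⟩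
  obtain rfl | rfl | hn : n = 0 ∨ n = 1 ∨ 2 ≤ n := by omega
  · rw [repByMinors, Set.range_eq_empty, Ideal.span_empty]
    exact hasProjectiveDimensionLT_one_quotient_bot _
  · rw [repByMinors, Set.range_unique]
    exact hasProjectiveDimensionLT_two_quotient_span_singleton _
  have hrow₁ : ∀ j, ((Fin.cons x u : Fin (n + 1) → _) j).IsHomogeneous 1 := Fin.cases hx hu
  have hrow₂ : ∀ j, ((Fin.cons y v : Fin (n + 1) → _) j).IsHomogeneous 1 := Fin.cases hy hv
  refine hasProjectiveDimensionLE_quotient_repByMinors hn ?_ ?_ ?_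
  · exact permutablyRegular_of_linearIndependent (Fin.cases hx <| Fin.cases hy finZeroElim) hxy
  · refine permutablyRegular_of_linearIndependent hrow₂ ?_
    simpa [columns] using h1g.linearIndependent_rowCombination (a := ![0, 1]) (by simp)
  · refine permutablyRegular_pencilForm hrow₁ hrow₂ fun l => ?_
    simpa [sub_eq_add_neg] using
      h1g.linearIndependent_rowCombination (a := ![1, -l]) (by simp)
end

section
/- Let R be a polynomial ring over an algebraically closed field K. Let I be an ideal minimally generated by n quadrics, contained in a prime ideal (x, y) with x, y linearly independent linear forms, and suppose I is represented by minors by a 2×(n+1) matrix M of linear forms whose first column is (x, y)^T. If M is 1-generic, then I₂(M) = I : (x, y) = I : (x) = I : (y), where I₂(M) is the ideal of all 2×2 minors of M. -/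
open MvPolynomial Filter

universe u

/-! The rows `a` and `b` of a 1-generic matrix are linearly independent over `K`. Linearly
independent linear forms are part of a system of coordinates, so every syzygy of `a` is a
combination of Koszul relations, and replacing `a` by `b` in a syzygy of `a` therefore produces an
element of `I₂(M)`.
If `r * x ∈ I`, say `r * x = ∑ h j * (x * v j - y * u j)`, then `x` divides `y * ∑ h j * u j`, hence
`∑ h j * u j = x * c` for some `c`. So `(-c, h)` is a syzygy of `a`, and cancelling `x` shows that
`r = -c * y + ∑ h j * v j` is what it becomes when `a` is replaced by `b`. -/

section PermutablyRegular

variable {R S : Type*} [CommRing R] [CommRing S] {ι κ : Type*} {a : ι → R}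

/-- The elements `a i` form a weakly regular sequence in whatever order they are taken: each of them
is a nonzerodivisor modulo any set of others. The quotient by all the `a i` may be zero. -/
def IsPermutablyRegular (a : ι → R) : Prop :=
  ∀ ⦃s : Set ι⦄ ⦃k : ι⦄, k ∉ s → ∀ ⦃z : R⦄,
    z * a k ∈ Ideal.span (a '' s) → z ∈ Ideal.span (a '' s)

theorem IsPermutablyRegular.comp_injective (ha : IsPermutablyRegular a) {f : κ → ι}
    (hf : Function.Injective f) : IsPermutablyRegular (a ∘ f) := by
  intro s k hk z hz
  rw [Set.image_comp] at hz ⊢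
  exact ha (hf.mem_set_image.not.2 hk) hz

theorem IsPermutablyRegular.map_ringEquiv (ha : IsPermutablyRegular a) (e : R ≃+* S) :
    IsPermutablyRegular (e ∘ a) := by
  intro s k hk z hz
  have mem_iff (w : S) : w ∈ Ideal.span (e ∘ a '' s) ↔ e.symm w ∈ Ideal.span (a '' s) := by
    rw [Set.image_comp, Ideal.symm_apply_mem_of_equiv_iff, Ideal.map_span]
  rw [mem_iff] at hz ⊢
  exact ha hk (by simpa using hz)

theorem IsPermutablyRegular.eq_zero_of_mul_eq_zero (ha : IsPermutablyRegular a) (k : ι) {z : R}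
    (hz : z * a k = 0) : z = 0 := by
  simpa using ha (Set.notMem_empty k) (z := z) (by simp [hz])

theorem IsPermutablyRegular.dvd_of_dvd_mul (ha : IsPermutablyRegular a) {i k : ι} (hik : i ≠ k)
    {z : R} (hz : a i ∣ z * a k) : a i ∣ z := by
  simpa [Ideal.mem_span_singleton] using
    ha (s := {i}) (k := k) (by simpa using hik.symm) (z := z)
      (by simpa [Ideal.mem_span_singleton] using hz)

theorem IsPermutablyRegular.sum_mul_mem_of_sum_mul_eq_zero (ha : IsPermutablyRegular a) {b : ι → R}
    {J : Ideal R} (hJ : ∀ i j, a i * b j - a j * b i ∈ J) (S : Finset ι) {h : ι → R}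
    (h0 : ∑ i ∈ S, h i * a i = 0) : ∑ i ∈ S, h i * b i ∈ J := by
  classical
  induction S using Finset.induction_on generalizing h with
  | empty => simp
  | insert k S hk ih =>
    rw [Finset.sum_insert hk] at h0 ⊢
    have hk_mem : h k ∈ Ideal.span (a '' S) := by
      refine ha (mt Finset.mem_coe.1 hk) ?_
      rw [eq_neg_of_add_eq_zero_left h0]
      exact neg_mem (sum_mem fun i hi ↦
        Ideal.mul_mem_left _ _ (Ideal.subset_span (Set.mem_image_of_mem a hi)))
    obtain ⟨d, hd⟩ : ∃ d : ι → R, ∑ i ∈ S, d i * a i = h k :=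
      (Submodule.mem_span_image_finset_iff_exists_fun' R).1 hk_mem
    -- Subtracting multiples of the Koszul relations between `a i` and `a k` kills the `k`-th term.
    have syzygy : ∑ i ∈ S, (h i + d i * a k) * a i = 0 := by
      rw [← h0, ← hd, Finset.sum_mul, ← Finset.sum_add_distrib]
      exact Finset.sum_congr rfl fun i _ ↦ by ring
    have koszul : ∑ i ∈ S, d i * (a i * b k - a k * b i) ∈ J :=
      sum_mem fun i _ ↦ Ideal.mul_mem_left _ _ (hJ i k)
    convert add_mem (ih syzygy) koszul using 1
    rw [← hd, Finset.sum_mul, ← Finset.sum_add_distrib, ← Finset.sum_add_distrib]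
    exact Finset.sum_congr rfl fun i _ ↦ by ring

end PermutablyRegular

section LinearForms

universe v w

variable {σ : Type v} {ι : Type*}

theorem isPermutablyRegular_X {R : Type*} [CommRing R] :
    IsPermutablyRegular (X : σ → MvPolynomial σ R) := by
  classical
  intro s k hk z hz
  rw [mem_ideal_span_X_image] at hz ⊢
  intro m hm
  obtain ⟨i, hi, hmi⟩ := hz (m + Finsupp.single k 1) (by simpa [coeff_mul_X] using hm)
  have hki : k ≠ i := fun h ↦ hk (h ▸ hi)
  exact ⟨i, hi, by simpa [Finsupp.single_apply, hki] using hmi⟩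

variable {K : Type w} [Field K] {a : ι → MvPolynomial σ K}

theorem exists_algEquiv_X_eq_of_linearIndependent (ha : ∀ i, (a i).IsHomogeneous 1)
    (hli : LinearIndependent K a) :
    ∃ (τ : Type (max v w)) (f : ι ↪ τ) (e : MvPolynomial τ K ≃ₐ[K] MvPolynomial σ K),
      ∀ i, e (X (f i)) = a i := by
  let e₀ := SymmetricAlgebra.equivMvPolynomial (Finsupp.basisSingleOne (R := K) (ι := σ))
  let L := e₀.toLinearMap ∘ₗ SymmetricAlgebra.ι K (σ →₀ K)
  have hL : homogeneousSubmodule σ K 1 ≤ LinearMap.range L := by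
    rw [homogeneousSubmodule_one_eq_span_X, Submodule.span_le]
    rintro _ ⟨j, rfl⟩
    exact ⟨_, SymmetricAlgebra.equivMvPolynomial_ι_apply Finsupp.basisSingleOne j⟩
  choose w hw using fun i ↦ hL (ha i)
  have hwli : LinearIndependent K w := .of_comp L (by rwa [show L ∘ w = a from funext hw])
  let B := Module.Basis.extend hwli.linearIndepOn_id
  have hwB (i : ι) : w i ∈ hwli.linearIndepOn_id.extend (Set.subset_univ (Set.range w)) :=
    hwli.linearIndepOn_id.subset_extend _ (Set.mem_range_self i)
  let f := Function.Embedding.codRestrict _ ⟨w, hwli.injective⟩ hwB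
  refine ⟨_, f, (SymmetricAlgebra.equivMvPolynomial B).symm.trans e₀, fun i ↦ ?_⟩
  have hB : B (f i) = w i := Module.Basis.extend_apply_self hwli.linearIndepOn_id (f i)
  rw [AlgEquiv.trans_apply, SymmetricAlgebra.equivMvPolynomial_symm_X, hB]
  exact hw i

theorem isPermutablyRegular_of_linearIndependent (ha : ∀ i, (a i).IsHomogeneous 1)
    (hli : LinearIndependent K a) : IsPermutablyRegular a := by
  obtain ⟨τ, f, e, he⟩ := exists_algEquiv_X_eq_of_linearIndependent ha hli
  rw [← show e ∘ X ∘ f = a from funext he]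
  exact (isPermutablyRegular_X.comp_injective f.injective).map_ringEquiv e.toRingEquiv

end LinearForms

theorem OneGeneric.linearIndependent_row {K R : Type*} [Field K] [CommRing R] [Algebra K R]
    {m l : ℕ} {M : Matrix (Fin m) (Fin l) R} (hM : OneGeneric K M) (i : Fin m) :
    LinearIndependent K (M i) := by
  rw [Fintype.linearIndependent_iff]
  intro c hc
  by_contra! hne
  refine hM (Pi.single i 1) c (by simp) (Function.ne_iff.2 hne) ?_
  rw [Finset.sum_eq_single_of_mem i (Finset.mem_univ i) fun j _ hji ↦ by simp [hji]]
  simpa [Algebra.smul_def] using hc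

section Minors

variable {R : Type*} [CommRing R] {n : ℕ}

theorem minor_mem_minors2 {l : ℕ} (M : Matrix (Fin 2) (Fin l) R) (i j : Fin l) :
    M 0 i * M 1 j - M 0 j * M 1 i ∈ minors2 M :=
  Ideal.subset_span ⟨(i, j), rfl⟩

theorem minors2_submatrix_rev_le {l : ℕ} (M : Matrix (Fin 2) (Fin l) R) :
    minors2 (M.submatrix Fin.rev id) ≤ minors2 M := by
  rw [minors2, Ideal.span_le]
  rintro _ ⟨⟨i, j⟩, rfl⟩
  convert minor_mem_minors2 M j i using 1
  simp [mul_comm]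

/-- The ideal represented by minors by `M`, that is, `repByMinors` for the first column and the
remaining columns of `M`. -/
def firstColumnMinors (M : Matrix (Fin 2) (Fin (n + 1)) R) : Ideal R :=
  repByMinors (M 0 0) (M 1 0) (fun j ↦ M 0 j.succ) fun j ↦ M 1 j.succ

variable (M : Matrix (Fin 2) (Fin (n + 1)) R)

theorem minor_mem_firstColumnMinors (j : Fin (n + 1)) :
    M 0 0 * M 1 j - M 1 0 * M 0 j ∈ firstColumnMinors M := by
  cases j using Fin.cases with
  | zero => simp [mul_comm]
  | succ j => exact Ideal.subset_span ⟨j, rfl⟩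

theorem firstColumnMinors_le_submatrix_rev :
    firstColumnMinors M ≤ firstColumnMinors (M.submatrix Fin.rev id) := by
  rw [firstColumnMinors, repByMinors, Ideal.span_le]
  rintro _ ⟨j, rfl⟩
  convert neg_mem (minor_mem_firstColumnMinors (M.submatrix Fin.rev id) j.succ) using 1
  simp

theorem minors2_le_colon_firstColumn :
    minors2 M ≤ (firstColumnMinors M).colon (Ideal.span {M 0 0, M 1 0}) := by
  rw [minors2, Ideal.span_le]
  rintro _ ⟨⟨i, j⟩, rfl⟩
  have row_combination_mem (k : Fin 2) :
      M k i * (M 0 0 * M 1 j - M 1 0 * M 0 j) - M k j * (M 0 0 * M 1 i - M 1 0 * M 0 i) ∈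
        firstColumnMinors M :=
    sub_mem (Ideal.mul_mem_left _ _ (minor_mem_firstColumnMinors M j))
      (Ideal.mul_mem_left _ _ (minor_mem_firstColumnMinors M i))
  simp only [Ideal.colon_span, SetLike.mem_coe, Submodule.mem_colon, Set.mem_insert_iff,
    Set.mem_singleton_iff, forall_eq_or_imp, forall_eq, smul_eq_mul]
  constructor
  · convert row_combination_mem 0 using 1
    ring
  · convert row_combination_mem 1 using 1
    ring

variable {M}

theorem mem_minors2_of_mul_mem_firstColumnMinors (hrow : IsPermutablyRegular (M 0))
    (hcol : IsPermutablyRegular fun i ↦ M i 0) {r : R}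
    (hr : r * M 0 0 ∈ firstColumnMinors M) : r ∈ minors2 M := by
  obtain ⟨h, hh⟩ := Ideal.mem_span_range_iff_exists_fun.1 hr
  have cross : M 0 0 * (∑ j, h j * M 1 j.succ - r) = (∑ j, h j * M 0 j.succ) * M 1 0 := by
    rw [mul_sub, mul_comm _ r, ← hh, Finset.mul_sum, Finset.sum_mul, ← Finset.sum_sub_distrib]
    exact Finset.sum_congr rfl fun j _ ↦ by ring
  obtain ⟨c, hc⟩ : M 0 0 ∣ ∑ j, h j * M 0 j.succ :=
    hcol.dvd_of_dvd_mul zero_ne_one ⟨_, cross.symm⟩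
  have r_eq : r = -c * M 1 0 + ∑ j, h j * M 1 j.succ := by
    refine sub_eq_zero.1 (hrow.eq_zero_of_mul_eq_zero 0 ?_)
    linear_combination -M 1 0 * hc - cross
  have syzygy : ∑ j, (Fin.cons (-c) h : Fin (n + 1) → R) j * M 0 j = 0 := by
    simp [Fin.sum_univ_succ, hc, mul_comm]
  simpa [Fin.sum_univ_succ, r_eq] using
    hrow.sum_mul_mem_of_sum_mul_eq_zero (minor_mem_minors2 M) Finset.univ syzygy

theorem colon_span_singleton_le_minors2 (i : Fin 2) (hrow : IsPermutablyRegular (M i))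
    (hcol : IsPermutablyRegular fun i ↦ M i 0) :
    (firstColumnMinors M).colon (Ideal.span {M i 0}) ≤ minors2 M := by
  intro r hr
  rw [Ideal.mem_colon_span_singleton] at hr
  match i with
  | 0 => exact mem_minors2_of_mul_mem_firstColumnMinors hrow hcol hr
  | 1 =>
    exact minors2_submatrix_rev_le M <| mem_minors2_of_mul_mem_firstColumnMinors
      (M := M.submatrix Fin.rev id) hrow (hcol.comp_injective Fin.rev_injective)
      (firstColumnMinors_le_submatrix_rev M hr)

theorem minors2_eq_colon_firstColumnMinors (hrow : ∀ i, IsPermutablyRegular (M i))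
    (hcol : IsPermutablyRegular fun i ↦ M i 0) :
    minors2 M = (firstColumnMinors M).colon (Ideal.span {M 0 0, M 1 0}) ∧
    minors2 M = (firstColumnMinors M).colon (Ideal.span {M 0 0}) ∧
    minors2 M = (firstColumnMinors M).colon (Ideal.span {M 1 0}) := by
  have colon_le_zero : (firstColumnMinors M).colon (Ideal.span {M 0 0, M 1 0}) ≤
      (firstColumnMinors M).colon (Ideal.span {M 0 0}) :=
    Submodule.colon_mono le_rfl (Ideal.span_mono (by simp))
  have colon_le_one : (firstColumnMinors M).colon (Ideal.span {M 0 0, M 1 0}) ≤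
      (firstColumnMinors M).colon (Ideal.span {M 1 0}) :=
    Submodule.colon_mono le_rfl (Ideal.span_mono (by simp))
  have le_colon := minors2_le_colon_firstColumn M
  have zero_le := colon_span_singleton_le_minors2 0 (hrow 0) hcol
  have one_le := colon_span_singleton_le_minors2 1 (hrow 1) hcol
  exact ⟨le_colon.antisymm (colon_le_zero.trans zero_le),
    (le_colon.trans colon_le_zero).antisymm zero_le, (le_colon.trans colon_le_one).antisymm one_le⟩

end Minors

theorem stmt8_general {K σ : Type*} [Field K] {n : ℕ}
    {M : Matrix (Fin 2) (Fin (n + 1)) (MvPolynomial σ K)} (hM : ∀ i j, (M i j).IsHomogeneous 1)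
    (hrow : ∀ i, LinearIndependent K (M i)) (hcol : LinearIndependent K fun i ↦ M i 0) :
    minors2 M = (firstColumnMinors M).colon (Ideal.span {M 0 0, M 1 0}) ∧
    minors2 M = (firstColumnMinors M).colon (Ideal.span {M 0 0}) ∧
    minors2 M = (firstColumnMinors M).colon (Ideal.span {M 1 0}) :=
  minors2_eq_colon_firstColumnMinors
    (fun i ↦ isPermutablyRegular_of_linearIndependent (hM i) (hrow i))
    (isPermutablyRegular_of_linearIndependent (hM · 0) hcol)

/-- in the situation of Statement 7, the ideal of all `2 × 2` minors of `M`
satisfies `I₂(M) = I : (x, y) = I : (x) = I : (y)`. -/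
theorem stmt8 (K : Type u) [Field K] [IsAlgClosed K] (N n : ℕ)
    (x y : MvPolynomial (Fin N) K) (hx : x.IsHomogeneous 1) (hy : y.IsHomogeneous 1)
    (hxy : LinearIndependent K ![x, y])
    (hprime : (Ideal.span {x, y}).IsPrime)
    (u v : Fin n → MvPolynomial (Fin N) K)
    (hu : ∀ j, (u j).IsHomogeneous 1) (hv : ∀ j, (v j).IsHomogeneous 1)
    (I : Ideal (MvPolynomial (Fin N) K))
    (hI : I = repByMinors x y u v)
    (hle : I ≤ Ideal.span {x, y})
    (hmin : ∀ (k : ℕ) (h : Fin k → MvPolynomial (Fin N) K),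
      I = Ideal.span (Set.range h) → n ≤ k)
    (h1g : OneGeneric K (Matrix.of ![Fin.cons x u, Fin.cons y v] : Matrix (Fin 2) (Fin (n + 1)) (MvPolynomial (Fin N) K))) :
    minors2 (Matrix.of ![Fin.cons x u, Fin.cons y v] : Matrix (Fin 2) (Fin (n + 1)) (MvPolynomial (Fin N) K)) = Submodule.colon I (Ideal.span {x, y}) ∧
    minors2 (Matrix.of ![Fin.cons x u, Fin.cons y v] : Matrix (Fin 2) (Fin (n + 1)) (MvPolynomial (Fin N) K)) = Submodule.colon I (Ideal.span {x}) ∧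
    minors2 (Matrix.of ![Fin.cons x u, Fin.cons y v] : Matrix (Fin 2) (Fin (n + 1)) (MvPolynomial (Fin N) K)) = Submodule.colon I (Ideal.span {y}) := by
  subst hI
  exact stmt8_general (Fin.forall_fin_two.2 ⟨Fin.cases hx hu, Fin.cases hy hv⟩)
    h1g.linearIndependent_row (by convert hxy with i; fin_cases i <;> rfl)
end

section
/- Let R be a polynomial ring over an algebraically closed field K. Let I be an ideal minimally generated by n quadrics represented by minors by the 2×(n+1) matrix M = [[x, 0, a_{12}, a_{13}, …, a_{1n}], [y, a_{21}, a_{22}, a_{23}, …, a_{2n}]], where all entries are linear forms or zero, x and y are linearly independent, and the submatrix D = [[x, a_{12}, …, a_{1n}], [y, a_{22}, …, a_{2n}]] obtained by deleting the second column is 1-generic. Then pd(R/I) ≤ n. -/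
open MvPolynomial Filter

universe u

/-!
Write `P` for the ideal of `2 × 2` minors of `D`, and `aⱼ`, `cⱼ` for the entries of its rows, with
`a₁ = x` and `c₁ = y`. In `R[t]` the forms `cⱼ - t aⱼ` generate a prime ideal contracting to `P`:
they are linear forms over `K[t]`, and since `K` is algebraically closed and every `cⱼ - r aⱼ`
family is linearly independent, no nonzero polynomial in `t` is a zero divisor modulo them. So `P`
is prime.

Adding a column `k` to `s` links two ideals: modulo the minors of `s`, with `δ = aₖ c₁ - cₖ a₁`, the
ideal `x P(s ∪ {k})` agrees with `δ (aⱼ : j ∈ s)`, where `x` and `δ` are regular modulo `P(s)`. By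
induction `pd (R/P) ≤ n - 1`.

Finally `I = Q + x (P + (b))`, where `Q` is generated by the minors of `D` through its first column.
Then `I : x = P + (b)` and `I + (x) = (x) + y (aⱼ)`, both of whose quotients have projective
dimension at most `n`, and `0 → R/(I : x) → R/I → R/(I + (x)) → 0` is exact.
-/

section ProjectiveDimension

open CategoryTheory

variable {R : Type u} [CommRing R]

theorem pdLE_of_hasProjectiveDimensionLE : ∀ (n : ℕ) (M : Type u) [AddCommGroup M] [Module R M],
    HasProjectiveDimensionLE (ModuleCat.of R M) n → PdLE R n M
  | 0, M, _, _, h =>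
    (IsProjective.iff_projective M).mpr ((projective_iff_hasProjectiveDimensionLE_zero _).mpr h)
  | n + 1, M, _, _, h => by
    have hsurj := Finsupp.linearCombination_id_surjective R M
    have hproj : HasProjectiveDimensionLE (ModuleCat.of R (M →₀ R)) 0 :=
      (projective_iff_hasProjectiveDimensionLE_zero _).mp
        ((IsProjective.iff_projective _).mp inferInstance)
    refine ⟨M →₀ R, inferInstance, inferInstance, inferInstance, _, hsurj, ?_⟩
    exact pdLE_of_hasProjectiveDimensionLE n _ <|
      (LinearMap.shortExact_shortComplexKer hsurj).hasProjectiveDimensionLT_X₁ (n + 1)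
        (hasProjectiveDimensionLT_of_ge _ 1 (n + 1) (by lia)) h

theorem projDim_le_of_hasProjectiveDimensionLE {n : ℕ} {M : Type u} [AddCommGroup M] [Module R M]
    (h : HasProjectiveDimensionLE (ModuleCat.of R M) n) : projDim R M ≤ n :=
  sInf_le (Set.mem_image_of_mem _ (pdLE_of_hasProjectiveDimensionLE n M h))

theorem colon_singleton_eq_comap (I : Ideal R) (z : R) :
    I.colon {z} = Submodule.comap (LinearMap.toSpanSingleton R R z) I :=
  Submodule.ext fun _ => Submodule.mem_colon_singleton

/-- The complex `0 → R/(I : z) → R/I → R/(I + (z)) → 0` whose first map is multiplication by `z`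
and whose second map is the projection. -/
noncomputable def colonShortComplex (I : Ideal R) (z : R) : ShortComplex (ModuleCat.{u} R) :=
  ModuleCat.shortComplexOfCompEqZero
    (Submodule.mapQ (I.colon {z}) I (LinearMap.toSpanSingleton R R z)
      (colon_singleton_eq_comap I z).le)
    (Submodule.factor (le_sup_left : I ≤ I ⊔ Ideal.span {z})) <| by
      refine Submodule.linearMap_qext _ (LinearMap.ext_ring ?_)
      have hz : (1 : R) • z ∈ I ⊔ Ideal.span {z} := by
        simpa using Ideal.mem_sup_right (Ideal.mem_span_singleton_self z)
      exact (Submodule.Quotient.mk_eq_zero _).mpr hz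

theorem shortExact_colonShortComplex (I : Ideal R) (z : R) :
    (colonShortComplex I z).ShortExact := by
  refine ModuleCat.shortComplex_shortExact _ (LinearMap.exact_iff.mpr ?_)
    (LinearMap.ker_eq_bot.mp ?_) (Submodule.factor_surjective le_sup_left)
  · have hker := Submodule.ker_mapQ I (I ⊔ Ideal.span {z}) LinearMap.id le_sup_left
    have hrange := Submodule.range_mapQ _ I _ (colon_singleton_eq_comap I z).le
    refine hker.trans (.trans ?_ hrange.symm)
    rw [Submodule.comap_id, Submodule.map_sup, Submodule.mkQ_map_self, bot_sup_eq,
      LinearMap.range_toSpanSingleton, Ideal.submodule_span_eq]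
  · refine (Submodule.ker_mapQ _ I _ (colon_singleton_eq_comap I z).le).trans ?_
    rw [← colon_singleton_eq_comap, Submodule.mkQ_map_self]
    rfl

/-- `R/I` has projective dimension at most `n` over `R`. -/
def QuotPdLE (I : Ideal R) (n : ℕ) : Prop :=
  HasProjectiveDimensionLE (ModuleCat.of R (R ⧸ I)) n

namespace QuotPdLE

variable {I J Q : Ideal R} {z : R} {n k : ℕ}

theorem mono (hnk : n ≤ k) (h : QuotPdLE I n) : QuotPdLE I k :=
  haveI : HasProjectiveDimensionLT (ModuleCat.of R (R ⧸ I)) (n + 1) := h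
  hasProjectiveDimensionLT_of_ge _ (n + 1) (k + 1) (by lia)

theorem bot : QuotPdLE (⊥ : Ideal R) 0 :=
  (projective_iff_hasProjectiveDimensionLE_zero _).mp <| (IsProjective.iff_projective _).mp <|
    Module.Projective.of_equiv (Submodule.quotEquivOfEqBot (⊥ : Ideal R) rfl).symm

theorem of_colon_of_sup (hcolon : QuotPdLE (I.colon {z}) n)
    (hsup : QuotPdLE (I ⊔ Ideal.span {z}) n) : QuotPdLE I n :=
  (shortExact_colonShortComplex I z).hasProjectiveDimensionLT_X₂ (n + 1) hcolon hsup

theorem colon (h : QuotPdLE I n) (hsup : QuotPdLE (I ⊔ Ideal.span {z}) (n + 1)) :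
    QuotPdLE (I.colon {z}) n :=
  (shortExact_colonShortComplex I z).hasProjectiveDimensionLT_X₁ (n + 1) h hsup

theorem sup_of_colon (hcolon : QuotPdLE (I.colon {z}) n) (h : QuotPdLE I (n + 1)) :
    QuotPdLE (I ⊔ Ideal.span {z}) (n + 1) :=
  (shortExact_colonShortComplex I z).hasProjectiveDimensionLT_X₃ (n + 1) hcolon h

theorem sup_span_singleton (h : QuotPdLE I n) (hz : IsSMulRegular (R ⧸ I) z) :
    QuotPdLE (I ⊔ Ideal.span {z}) (n + 1) := by
  have hcolon : I.colon {z} = I := by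
    refine le_antisymm (fun f hf => ?_) Ideal.le_colon
    rw [Submodule.mem_colon_singleton, smul_eq_mul, mul_comm f z] at hf
    exact mem_of_isSMulRegular_quotient_of_smul_mem hz hf
  exact sup_of_colon (by rwa [hcolon]) (h.mono n.le_succ)

end QuotPdLE

variable {I J Q : Ideal R} {z : R} {n : ℕ}

theorem colon_sup_span_singleton_mul (hz : ∀ f, z * f ∈ Q → f ∈ J) :
    (Q ⊔ Ideal.span {z} * J).colon {z} = J := by
  ext f
  rw [Submodule.mem_colon_singleton, smul_eq_mul, mul_comm f z]
  refine ⟨fun hf => ?_, fun hf =>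
    Ideal.mem_sup_right (Ideal.mul_mem_mul (Ideal.mem_span_singleton_self z) hf)⟩
  obtain ⟨q, hq, _, hw, hqw⟩ := Submodule.mem_sup.mp hf
  obtain ⟨g, hg, rfl⟩ := Ideal.mem_span_singleton_mul.mp hw
  have hfg : z * (f - g) ∈ Q := by rwa [mul_sub, sub_eq_of_eq_add hqw.symm]
  simpa using J.add_mem (hz _ hfg) hg

theorem sup_span_singleton_mul_sup : Q ⊔ Ideal.span {z} * J ⊔ Ideal.span {z} =
    Q ⊔ Ideal.span {z} := by
  rw [sup_assoc, sup_eq_right.mpr (Ideal.mul_le_left : Ideal.span {z} * J ≤ _)]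

theorem QuotPdLE.sup_span_singleton_mul (hz : ∀ f, z * f ∈ Q → f ∈ J) (hJ : QuotPdLE J n)
    (hQ : QuotPdLE (Q ⊔ Ideal.span {z}) n) : QuotPdLE (Q ⊔ Ideal.span {z} * J) n :=
  of_colon_of_sup (z := z) (by rwa [colon_sup_span_singleton_mul hz])
    (by rwa [sup_span_singleton_mul_sup])

theorem QuotPdLE.of_sup_span_singleton_mul (hz : ∀ f, z * f ∈ Q → f ∈ J)
    (h : QuotPdLE (Q ⊔ Ideal.span {z} * J) n) (hQ : QuotPdLE (Q ⊔ Ideal.span {z}) (n + 1)) :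
    QuotPdLE J n := by
  rw [← sup_span_singleton_mul_sup (J := J)] at hQ
  simpa only [colon_sup_span_singleton_mul hz] using h.colon hQ

end ProjectiveDimension

section Minors

variable {R ι : Type*} [CommRing R]

/-- The ideal of `2 × 2` minors of the `2 × s` matrix with rows `a` and `c`. -/
def minorIdeal (a c : ι → R) (s : Set ι) : Ideal R :=
  Ideal.span (Set.image2 (fun i j => a i * c j - c i * a j) s s)

/-- The ideal of the minors of the matrix with rows `a` and `c` that pair the column `k` with a
column in `s`. -/
def columnIdeal (a c : ι → R) (k : ι) (s : Set ι) : Ideal R :=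
  Ideal.span ((fun j => a k * c j - c k * a j) '' s)

/-- The pencil `c - t a` spanned by the rows `a` and `c` of a matrix, where `t` is a new
variable. -/
noncomputable def pencil (a c : ι → R) (j : ι) : Polynomial R :=
  Polynomial.C (c j) - Polynomial.X * Polynomial.C (a j)

/-- The ideal generated by the entries of the pencil `c - t a` in the columns `s`. -/
noncomputable def pencilIdeal (a c : ι → R) (s : Set ι) : Ideal (Polynomial R) :=
  Ideal.span (pencil a c '' s)

/-- Every finite subfamily of `a`, in every order, is a weakly regular sequence. -/
def IsPermutableRegular (a : ι → R) : Prop :=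
  ∀ (s : Finset ι), ∀ i ∉ s, IsSMulRegular (R ⧸ Ideal.span (a '' s)) (a i)

variable {a c : ι → R}

theorem minor_mem_minorIdeal {s : Set ι} {i j : ι} (hi : i ∈ s) (hj : j ∈ s) :
    a i * c j - c i * a j ∈ minorIdeal a c s :=
  Ideal.subset_span (Set.mem_image2_of_mem hi hj)

theorem minorIdeal_mono {s t : Set ι} (hst : s ⊆ t) : minorIdeal a c s ≤ minorIdeal a c t :=
  Ideal.span_mono (Set.image2_subset hst hst)

theorem minorIdeal_sub_mul_left (r : R) (s : Set ι) :
    minorIdeal (fun j => c j - r * a j) a s = minorIdeal a c s := by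
  rw [minorIdeal, Set.image2_swap, minorIdeal]
  congr 2
  ext i j
  ring

theorem minorIdeal_le_span (s : Set ι) : minorIdeal a c s ≤ Ideal.span (a '' s) := by
  refine Ideal.span_le.mpr (Set.image2_subset_iff.mpr fun i hi j hj => ?_)
  have mem {k} (hk : k ∈ s) : a k ∈ Ideal.span (a '' s) :=
    Ideal.subset_span (Set.mem_image_of_mem a hk)
  exact sub_mem (Ideal.mul_mem_right _ _ (mem hi)) (Ideal.mul_mem_left _ _ (mem hj))

theorem pencil_mem_pencilIdeal {s : Set ι} {j : ι} (hj : j ∈ s) :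
    pencil a c j ∈ pencilIdeal a c s :=
  Ideal.subset_span (Set.mem_image_of_mem _ hj)

theorem minorIdeal_le_comap_pencilIdeal (s : Set ι) :
    minorIdeal a c s ≤ (pencilIdeal a c s).comap Polynomial.C := by
  refine Ideal.span_le.mpr (Set.image2_subset_iff.mpr fun i hi j hj => ?_)
  have hminor : Polynomial.C (a i * c j - c i * a j) =
      Polynomial.C (a i) * pencil a c j - Polynomial.C (a j) * pencil a c i := by
    simp only [pencil, map_sub, map_mul]
    ring
  rw [SetLike.mem_coe, Ideal.mem_comap, hminor]
  exact sub_mem (Ideal.mul_mem_left _ _ (pencil_mem_pencilIdeal hj))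
    (Ideal.mul_mem_left _ _ (pencil_mem_pencilIdeal hi))

theorem exists_sum_of_mem_minorIdeal {s : Finset ι} {f : R} (hf : f ∈ minorIdeal a c s) :
    ∃ g : ι → R, ∑ j ∈ s, g j * a j = f ∧ ∑ j ∈ s, g j * c j = 0 := by
  classical
  induction hf using Submodule.span_induction with
  | mem f hf =>
    obtain ⟨i, hi, j, hj, rfl⟩ := hf
    have sum_eq (b : ι → R) : ∑ k ∈ s, (Pi.single i (c j) - Pi.single j (c i) : ι → R) k * b k =
        c j * b i - c i * b j := by
      simp [sub_mul, Pi.single_apply, Finset.mem_coe.mp hi, Finset.mem_coe.mp hj]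
    exact ⟨_, by rw [sum_eq]; ring, by rw [sum_eq]; ring⟩
  | zero => exact ⟨0, by simp, by simp⟩
  | add f f' _ _ ih ih' =>
    obtain ⟨g, rfl, hg⟩ := ih
    obtain ⟨g', rfl, hg'⟩ := ih'
    refine ⟨g + g', ?_, ?_⟩ <;> simp [add_mul, Finset.sum_add_distrib, hg, hg']
  | smul r f _ ih =>
    obtain ⟨g, rfl, hg⟩ := ih
    refine ⟨r • g, ?_, ?_⟩ <;> simp [mul_assoc, ← Finset.mul_sum, hg]

namespace IsPermutableRegular

theorem mem_of_mul_mem (ha : IsPermutableRegular a) {s : Finset ι} {i : ι} (hi : i ∉ s) {f : R}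
    (hf : a i * f ∈ Ideal.span (a '' s)) : f ∈ Ideal.span (a '' s) :=
  mem_of_isSMulRegular_quotient_of_smul_mem (ha s i hi) hf

-- The Koszul syzygies of `a` generate all syzygies, and `c` maps them to minors.
theorem sum_mul_mem_minorIdeal_of_eq_zero (ha : IsPermutableRegular a) (s : Finset ι) (g : ι → R)
    (hg : ∑ j ∈ s, g j * a j = 0) : ∑ j ∈ s, g j * c j ∈ minorIdeal a c s := by
  classical
  induction s using Finset.induction_on generalizing g with
  | empty => simp
  | insert k s hk ih =>
    rw [Finset.sum_insert hk] at hg ⊢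
    obtain ⟨r, hr⟩ : ∃ r : ι → R, ∑ j ∈ s, r j * a j = g k := by
      refine (Submodule.mem_span_image_finset_iff_exists_fun' R).mp (ha.mem_of_mul_mem hk ?_)
      rw [mul_comm, eq_neg_of_add_eq_zero_left hg]
      exact neg_mem (Ideal.sum_mem _ fun j hj => Ideal.mul_mem_left _ _
        (Ideal.subset_span (Set.mem_image_of_mem a hj)))
    have hzero : ∑ j ∈ s, (g j + r j * a k) * a j = 0 := by
      rw [← hg, ← hr, Finset.sum_mul, ← Finset.sum_add_distrib]
      exact Finset.sum_congr rfl fun j _ => by ring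
    have hsplit : g k * c k + ∑ j ∈ s, g j * c j =
        ∑ j ∈ s, (g j + r j * a k) * c j + ∑ j ∈ s, r j * (a j * c k - c j * a k) := by
      rw [← hr, Finset.sum_mul, ← Finset.sum_add_distrib, ← Finset.sum_add_distrib]
      exact Finset.sum_congr rfl fun j _ => by ring
    rw [hsplit, Finset.coe_insert]
    refine add_mem (minorIdeal_mono (Set.subset_insert _ _) (ih _ hzero))
      (Ideal.sum_mem _ fun j hj => Ideal.mul_mem_left _ _ (minor_mem_minorIdeal ?_ ?_))
    · exact Set.mem_insert_of_mem k hj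
    · exact Set.mem_insert k _

theorem sum_mul_mem_minorIdeal (ha : IsPermutableRegular a) {s : Finset ι} {g : ι → R}
    (hg : ∑ j ∈ s, g j * a j ∈ minorIdeal a c s) : ∑ j ∈ s, g j * c j ∈ minorIdeal a c s := by
  obtain ⟨g', hg'a, hg'c⟩ := exists_sum_of_mem_minorIdeal hg
  have hmem := ha.sum_mul_mem_minorIdeal_of_eq_zero (c := c) s (g - g')
    (by simp [sub_mul, hg'a])
  simpa [sub_mul, hg'c] using hmem

-- If `f = ∑ gⱼ (cⱼ - t aⱼ)`, comparing coefficients of `t` from the top down shows that the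
-- coefficients of `∑ gⱼ aⱼ`, hence those of `∑ gⱼ cⱼ`, lie in the ideal of minors.
theorem comap_C_pencilIdeal (ha : IsPermutableRegular a) (s : Finset ι) :
    (pencilIdeal a c s).comap Polynomial.C = minorIdeal a c s := by
  refine le_antisymm (fun f hf => ?_) (minorIdeal_le_comap_pencilIdeal _)
  obtain ⟨g, hg⟩ := (Submodule.mem_span_image_finset_iff_exists_fun' _).mp (Ideal.mem_comap.mp hf)
  simp only [pencil, smul_eq_mul, mul_sub, Finset.sum_sub_distrib] at hg
  have coeff_zero : ∑ j ∈ s, (g j).coeff 0 * c j = f := by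
    simpa [Polynomial.finsetSum_coeff, Polynomial.mul_coeff_zero] using
      congrArg (Polynomial.coeff · 0) hg
  have coeff_succ (k : ℕ) :
      ∑ j ∈ s, (g j).coeff (k + 1) * c j = ∑ j ∈ s, (g j).coeff k * a j := by
    simpa [Polynomial.finsetSum_coeff, ← mul_assoc, Polynomial.coeff_C_succ, sub_eq_zero] using
      congrArg (Polynomial.coeff · (k + 1)) hg
  have coeff_mem {k : ℕ} (hk : k ≤ s.sup (fun j => (g j).natDegree + 1)) :
      ∑ j ∈ s, (g j).coeff k * a j ∈ minorIdeal a c s := by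
    induction hk using Nat.decreasingInduction with
    | of_succ k _ ih => exact coeff_succ k ▸ ha.sum_mul_mem_minorIdeal ih
    | self =>
      rw [Finset.sum_eq_zero fun j hj => ?_]
      · exact zero_mem _
      · rw [Polynomial.coeff_eq_zero_of_natDegree_lt, zero_mul]
        exact Finset.le_sup (f := fun j => (g j).natDegree + 1) hj
  exact coeff_zero ▸ ha.sum_mul_mem_minorIdeal (coeff_mem (Nat.zero_le _))

end IsPermutableRegular

theorem isSMulRegular_X_sub_C {r : R} (h : IsPermutableRegular fun j => c j - r * a j)
    (s : Finset ι) :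
    IsSMulRegular (Polynomial R ⧸ pencilIdeal a c s) (Polynomial.X - Polynomial.C r) := by
  rw [isSMulRegular_quotient_iff_mem_of_smul_mem]
  intro f hf
  obtain ⟨g, hg⟩ := (Submodule.mem_span_image_finset_iff_exists_fun' _).mp hf
  simp only [smul_eq_mul] at hg
  have eval_zero : ∑ j ∈ s, (g j).eval r * (c j - r * a j) = 0 := by
    simpa [pencil, Polynomial.eval_finsetSum, mul_comm r] using congrArg (Polynomial.eval r) hg
  have eval_mem : ∑ j ∈ s, (g j).eval r * a j ∈ minorIdeal a c s :=
    minorIdeal_sub_mul_left r _ ▸ h.sum_mul_mem_minorIdeal_of_eq_zero s _ eval_zero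
  choose q hq using fun j => Polynomial.X_sub_C_dvd_sub_C_eval (p := g j) (a := r)
  have hf_eq : (Polynomial.X - Polynomial.C r) * f = (Polynomial.X - Polynomial.C r) *
      (∑ j ∈ s, q j * pencil a c j - Polynomial.C (∑ j ∈ s, (g j).eval r * a j)) := by
    have hC := congrArg Polynomial.C eval_zero
    simp only [map_sum, map_mul, map_sub, map_zero] at hC
    rw [← hg, map_sum, ← Finset.sum_sub_distrib, Finset.mul_sum, ← sub_eq_zero, ← hC,
      ← Finset.sum_sub_distrib]
    refine Finset.sum_congr rfl fun j _ => ?_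
    rw [map_mul, pencil]
    linear_combination (Polynomial.C (c j) - Polynomial.X * Polynomial.C (a j)) * hq j
  rw [(Polynomial.monic_X_sub_C r).isRegular.left hf_eq]
  exact sub_mem
    (Ideal.sum_mem _ fun j hj => Ideal.mul_mem_left _ _ (pencil_mem_pencilIdeal hj))
    (minorIdeal_le_comap_pencilIdeal _ eval_mem)

theorem minorIdeal_of_subsingleton {s : Set ι} (hs : s.Subsingleton) : minorIdeal a c s = ⊥ := by
  refine Ideal.span_eq_bot.mpr ?_
  rintro _ ⟨i, hi, j, hj, rfl⟩
  simp only [hs hi hj, mul_comm (c j), sub_self]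

theorem mem_columnIdeal {k j : ι} {s : Set ι} (hj : j ∈ s) :
    a k * c j - c k * a j ∈ columnIdeal a c k s :=
  Ideal.subset_span (Set.mem_image_of_mem _ hj)

theorem columnIdeal_le_minorIdeal {k : ι} {s : Set ι} (hk : k ∈ s) :
    columnIdeal a c k s ≤ minorIdeal a c s :=
  Ideal.span_le.mpr (Set.image_subset_iff.mpr fun _ hj => minor_mem_minorIdeal hk hj)

theorem minorIdeal_insert (k : ι) (s : Set ι) :
    minorIdeal a c (insert k s) = minorIdeal a c s ⊔ columnIdeal a c k s := by
  refine le_antisymm (Ideal.span_le.mpr (Set.image2_subset_iff.mpr ?_)) (sup_le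
    (minorIdeal_mono (Set.subset_insert k s)) (.trans ?_
      (columnIdeal_le_minorIdeal (Set.mem_insert k s))))
  · rintro i (rfl | hi) j (rfl | hj)
    · simp [mul_comm]
    · exact Ideal.mem_sup_right (mem_columnIdeal hj)
    · rw [SetLike.mem_coe, ← neg_mem_iff, neg_sub, mul_comm (c i), mul_comm (a i)]
      exact Ideal.mem_sup_right (mem_columnIdeal hi)
    · exact Ideal.mem_sup_left (minor_mem_minorIdeal hi hj)
  · exact Ideal.span_mono (Set.image_mono (Set.subset_insert k s))

theorem span_singleton_mul_minorIdeal_le {k : ι} (s : Set ι) :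
    Ideal.span {a k} * minorIdeal a c s ≤ columnIdeal a c k s := by
  rw [minorIdeal, Ideal.span_mul_span', Set.singleton_mul, Ideal.span_le, Set.image_subset_iff,
    Set.image2_subset_iff]
  intro i hi j hj
  have hplucker : a k * (a i * c j - c i * a j) =
      a i * (a k * c j - c k * a j) - a j * (a k * c i - c k * a i) := by ring
  rw [Set.mem_preimage, hplucker]
  exact sub_mem (Ideal.mul_mem_left _ _ (mem_columnIdeal hj))
    (Ideal.mul_mem_left _ _ (mem_columnIdeal hi))

theorem span_singleton_mul_span_image (z : R) (u : ι → R) (s : Set ι) :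
    Ideal.span {z} * Ideal.span (u '' s) = Ideal.span ((fun j => z * u j) '' s) := by
  rw [Ideal.span_mul_span', Set.singleton_mul, Set.image_image]

theorem sup_span_image_congr {P : Ideal R} {u v : ι → R} {s : Set ι}
    (h : ∀ j ∈ s, u j - v j ∈ P) : P ⊔ Ideal.span (u '' s) = P ⊔ Ideal.span (v '' s) := by
  have key {u v : ι → R} (h : ∀ j ∈ s, u j - v j ∈ P) :
      P ⊔ Ideal.span (u '' s) ≤ P ⊔ Ideal.span (v '' s) := by
    refine sup_le le_sup_left (Ideal.span_le.mpr (Set.image_subset_iff.mpr fun j hj => ?_))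
    rw [Set.mem_preimage, ← sub_add_cancel (u j) (v j)]
    exact add_mem (Ideal.mem_sup_left (h j hj))
      (Ideal.mem_sup_right (Ideal.subset_span (Set.mem_image_of_mem v hj)))
  exact le_antisymm (key h) (key fun j hj => by simpa using neg_mem (h j hj))

-- Modulo the minors of `s`, the columns of `(a, c)` are proportional to the column `o`: the ideal
-- of minors of `insert k s` and the ideal of the entries of `a` are linked.
theorem minorIdeal_sup_span_mul_minorIdeal_insert {o k : ι} {s : Set ι} (ho : o ∈ s) :
    minorIdeal a c s ⊔ Ideal.span {a o} * minorIdeal a c (insert k s) =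
      minorIdeal a c s ⊔ Ideal.span {a k * c o - c k * a o} * Ideal.span (a '' s) := by
  rw [minorIdeal_insert, Ideal.mul_sup, ← sup_assoc,
    sup_eq_left.mpr (Ideal.mul_le_right : _ ≤ minorIdeal a c s),
    columnIdeal, span_singleton_mul_span_image, span_singleton_mul_span_image]
  refine sup_span_image_congr fun j hj => ?_
  have hminor : a o * (a k * c j - c k * a j) - (a k * c o - c k * a o) * a j =
      a k * (a o * c j - c o * a j) := by ring
  rw [hminor]
  exact Ideal.mul_mem_left _ _ (minor_mem_minorIdeal ho hj)

theorem span_sup_columnIdeal (o : ι) (s : Set ι) :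
    Ideal.span {a o} ⊔ columnIdeal a c o s =
      Ideal.span {a o} ⊔ Ideal.span {c o} * Ideal.span (a '' s) := by
  rw [← Ideal.span_singleton_neg (c o), span_singleton_mul_span_image]
  refine sup_span_image_congr fun j _ => ?_
  rw [neg_mul, sub_neg_eq_add, sub_add_cancel]
  exact Ideal.mul_mem_right _ _ (Ideal.mem_span_singleton_self _)

end Minors

section MinorsProjectiveDimension

variable {R : Type u} {ι : Type*} [CommRing R] {a c : ι → R} {n : ℕ}

theorem IsPermutableRegular.quotPdLE_span (ha : IsPermutableRegular a) (s : Finset ι) :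
    QuotPdLE (Ideal.span (a '' s)) s.card := by
  classical
  induction s using Finset.induction_on with
  | empty => simpa using QuotPdLE.bot
  | insert i s hi ih =>
    rw [Finset.card_insert_of_notMem hi, Finset.coe_insert, Set.image_insert_eq, Set.insert_eq,
      Set.union_comm, Ideal.span_union]
    exact ih.sup_span_singleton (ha s i hi)

theorem isSMulRegular_quotient_of_isPrime {P : Ideal R} (hP : P.IsPrime) {z : R} (hz : z ∉ P) :
    IsSMulRegular (R ⧸ P) z :=
  (isSMulRegular_quotient_iff_mem_of_smul_mem _ _).mpr fun _ hf =>
    (hP.mem_or_mem hf).resolve_left hz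

theorem quotPdLE_minorIdeal_insert {o k : ι} {s : Set ι} (ho : o ∈ s)
    (hprime : (minorIdeal a c s).IsPrime) (hao : a o ∉ minorIdeal a c s)
    (hδ : a k * c o - c k * a o ∉ minorIdeal a c s) (hminor : QuotPdLE (minorIdeal a c s) n)
    (hspan : QuotPdLE (Ideal.span (a '' s)) (n + 1)) :
    QuotPdLE (minorIdeal a c (insert k s)) (n + 1) := by
  have hlinked : QuotPdLE
      (minorIdeal a c s ⊔ Ideal.span {a k * c o - c k * a o} * Ideal.span (a '' s)) (n + 1) :=
    .sup_span_singleton_mul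
      (fun _ hf => minorIdeal_le_span s ((hprime.mem_or_mem hf).resolve_left hδ)) hspan
      (hminor.sup_span_singleton (isSMulRegular_quotient_of_isPrime hprime hδ))
  rw [← minorIdeal_sup_span_mul_minorIdeal_insert ho] at hlinked
  refine hlinked.of_sup_span_singleton_mul (fun _ hf => ?_)
    ((hminor.sup_span_singleton (isSMulRegular_quotient_of_isPrime hprime hao)).mono
      (n + 1).le_succ)
  exact minorIdeal_mono (Set.subset_insert k s) ((hprime.mem_or_mem hf).resolve_left hao)

end MinorsProjectiveDimension

section LinearForms

variable {σ F : Type*} [Field F] {S : Set (MvPolynomial σ F)}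

-- The quotient by `S` is a polynomial ring: `φ` is the substitution that projects the space of
-- linear forms along the span of `S`.
theorem exists_algHom_ker_eq_span (hS : ∀ ℓ ∈ S, ℓ.IsHomogeneous 1) :
    ∃ φ : MvPolynomial σ F →ₐ[F] MvPolynomial σ F, RingHom.ker φ = Ideal.span S ∧
      ∀ ℓ, ℓ.IsHomogeneous 1 → φ ℓ = 0 → ℓ ∈ Submodule.span F S := by
  let W := Submodule.span F S
  obtain ⟨s, hs⟩ := W.mkQ.exists_rightInverse_of_surjective (Submodule.range_mkQ W)
  replace hs (q) : W.mkQ (s q) = q := LinearMap.congr_fun hs q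
  have ker_section {p} (hp : s (W.mkQ p) = 0) : p ∈ W := by
    rw [← Submodule.Quotient.mk_eq_zero, ← Submodule.mkQ_apply, ← hs (W.mkQ p), hp, map_zero]
  let φ : MvPolynomial σ F →ₐ[F] MvPolynomial σ F := aeval fun i => s (W.mkQ (X i))
  have φ_eq {ℓ : MvPolynomial σ F} (hℓ : ℓ.IsHomogeneous 1) : φ ℓ = s (W.mkQ ℓ) := by
    rw [← mem_homogeneousSubmodule, homogeneousSubmodule_one_eq_span_X] at hℓ
    refine LinearMap.eqOn_span (f := φ.toLinearMap) (g := s ∘ₗ W.mkQ) ?_ hℓ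
    rintro _ ⟨i, rfl⟩
    exact aeval_X _ i
  have mk_φ : (Ideal.Quotient.mkₐ F (Ideal.span S)).comp φ = Ideal.Quotient.mkₐ F _ := by
    refine algHom_ext fun i => Ideal.Quotient.eq.mpr ?_
    have hW : φ (X i) - X i ∈ W := by
      rw [φ_eq (isHomogeneous_X F i), ← Submodule.Quotient.eq, ← Submodule.mkQ_apply, hs]
      rfl
    exact Submodule.span_le_restrictScalars F _ S hW
  refine ⟨φ, le_antisymm (fun f hf => ?_) (Ideal.span_le.mpr fun ℓ hℓ => ?_), fun ℓ hℓ hφℓ => ?_⟩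
  · rw [← Ideal.Quotient.eq_zero_iff_mem, ← Ideal.Quotient.mkₐ_eq_mk F, ← mk_φ, AlgHom.comp_apply,
      (RingHom.mem_ker).mp hf, map_zero]
  · have hmk : W.mkQ ℓ = 0 := (Submodule.Quotient.mk_eq_zero W).mpr (Submodule.subset_span hℓ)
    rw [SetLike.mem_coe, RingHom.mem_ker, φ_eq (hS ℓ hℓ), hmk, map_zero]
  · exact ker_section (φ_eq hℓ ▸ hφℓ)

theorem isPrime_span_of_isHomogeneous_one (hS : ∀ ℓ ∈ S, ℓ.IsHomogeneous 1) :
    (Ideal.span S).IsPrime := by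
  obtain ⟨φ, hker, -⟩ := exists_algHom_ker_eq_span hS
  exact hker ▸ RingHom.ker_isPrime φ

theorem mem_span_of_mem_ideal_span (hS : ∀ ℓ ∈ S, ℓ.IsHomogeneous 1) {ℓ : MvPolynomial σ F}
    (hℓ : ℓ.IsHomogeneous 1) (h : ℓ ∈ Ideal.span S) : ℓ ∈ Submodule.span F S := by
  obtain ⟨φ, hker, hφ⟩ := exists_algHom_ker_eq_span hS
  exact hφ ℓ hℓ ((RingHom.mem_ker).mp (hker ▸ h))

theorem notMem_ideal_span_image_of_linearIndependent {ι : Type*} {a : ι → MvPolynomial σ F}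
    (hhom : ∀ j, (a j).IsHomogeneous 1) (ha : LinearIndependent F a) {s : Set ι} {i : ι}
    (hi : i ∉ s) : a i ∉ Ideal.span (a '' s) := fun h =>
  ha.notMem_span_image hi <|
    mem_span_of_mem_ideal_span (Set.forall_mem_image.mpr fun j _ => hhom j) (hhom i) h

theorem isPermutableRegular_of_linearIndependent {ι : Type*} {a : ι → MvPolynomial σ F}
    (hhom : ∀ j, (a j).IsHomogeneous 1) (ha : LinearIndependent F a) : IsPermutableRegular a :=
  fun _ _ hi => isSMulRegular_quotient_of_isPrime
    (isPrime_span_of_isHomogeneous_one (Set.forall_mem_image.mpr fun j _ => hhom j))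
    (notMem_ideal_span_image_of_linearIndependent hhom ha hi)

theorem isPrime_span_of_isHomogeneous_one_of_C_mul_mem {A : Type*} [CommRing A] [IsDomain A]
    {S : Set (MvPolynomial σ A)} (hS : ∀ ℓ ∈ S, ℓ.IsHomogeneous 1)
    (hsat : ∀ p ≠ 0, ∀ f, C p * f ∈ Ideal.span S → f ∈ Ideal.span S) :
    (Ideal.span S).IsPrime := by
  let P := MvPolynomial σ (FractionRing A)
  let _ : Algebra (MvPolynomial σ A) P := algebraMvPolynomial
  let M := (nonZeroDivisors A).map (C (σ := σ))
  have hcomap : ((Ideal.span S).map (algebraMap _ P)).comap (algebraMap _ P) = Ideal.span S := by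
    refine le_antisymm (fun f hf => ?_) Ideal.le_comap_map
    obtain ⟨_, ⟨p, hp, rfl⟩, hpf⟩ :=
      (IsLocalization.algebraMap_mem_map_algebraMap_iff M P _ _).mp hf
    exact hsat p (nonZeroDivisors.ne_zero hp) f hpf
  have hprime : ((Ideal.span S).map (algebraMap _ P)).IsPrime := by
    rw [Ideal.map_span]
    exact isPrime_span_of_isHomogeneous_one
      (Set.forall_mem_image.mpr fun ℓ hℓ => (hS ℓ hℓ).map _)
  exact hcomap ▸ hprime.comap _

end LinearForms

section Exchange

variable {σ A : Type*} [CommRing A]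

/-- The isomorphism `A[σ][t] ≃ A[t][σ]`, which moves the parameter of a pencil into the
coefficients. -/
noncomputable def exchangeEquiv (σ A : Type*) [CommRing A] :
    Polynomial (MvPolynomial σ A) ≃ₐ[A] MvPolynomial σ (Polynomial A) :=
  (optionEquivLeft A σ).symm.trans (optionEquivRight A σ)

theorem exchangeEquiv_X : exchangeEquiv σ A Polynomial.X = C Polynomial.X := by
  simp [exchangeEquiv]

theorem exchangeEquiv_C (f : MvPolynomial σ A) :
    exchangeEquiv σ A (Polynomial.C f) = map Polynomial.C f := by
  induction f using MvPolynomial.induction_on with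
  | C r => simp [exchangeEquiv]
  | add f g hf hg => simp only [map_add, hf, hg]
  | mul_X f i hf =>
    have hX : exchangeEquiv σ A (Polynomial.C (X i)) = X i := by simp [exchangeEquiv]
    simp only [map_mul, hf, hX, map_X]

theorem exchangeEquiv_map_C (p : Polynomial A) : exchangeEquiv σ A (p.map C) = C p := by
  induction p using Polynomial.induction_on' with
  | add p q hp hq => simp only [Polynomial.map_add, map_add, hp, hq]
  | monomial n r =>
    rw [← Polynomial.C_mul_X_pow_eq_monomial]
    simp [exchangeEquiv_X, exchangeEquiv_C]

end Exchange

section Degree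

variable {σ A : Type*} [CommRing A]

theorem mem_pow_idealOfVars_of_isHomogeneous {n : ℕ} {p : MvPolynomial σ A}
    (hp : p.IsHomogeneous n) : p ∈ idealOfVars σ A ^ n :=
  (mem_pow_idealOfVars_iff' n p).mpr fun _ hd => hp.coeff_eq_zero hd.ne

theorem eq_zero_of_isHomogeneous_of_mem_pow_idealOfVars {m n : ℕ} {p : MvPolynomial σ A}
    (hp : p.IsHomogeneous m) (hmn : m < n) (hmem : p ∈ idealOfVars σ A ^ n) : p = 0 := by
  ext d
  rcases eq_or_ne d.degree m with rfl | hd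
  · exact (mem_pow_idealOfVars_iff' n p).mp hmem d hmn
  · exact hp.coeff_eq_zero hd

theorem eq_zero_of_mem_minorIdeal {ι : Type*} {a c : ι → MvPolynomial σ A}
    (ha : ∀ j, (a j).IsHomogeneous 1) (hc : ∀ j, (c j).IsHomogeneous 1) {s : Set ι}
    {ℓ : MvPolynomial σ A} (hℓ : ℓ.IsHomogeneous 1) (hmem : ℓ ∈ minorIdeal a c s) : ℓ = 0 := by
  have hsq : minorIdeal a c s ≤ idealOfVars σ A ^ 2 :=
    Ideal.span_le.mpr (Set.image2_subset_iff.mpr fun i _ j _ =>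
      mem_pow_idealOfVars_of_isHomogeneous (((ha i).mul (hc j)).sub ((hc i).mul (ha j))))
  exact eq_zero_of_isHomogeneous_of_mem_pow_idealOfVars hℓ one_lt_two (hsq hmem)

end Degree

section OneGenericPencil

variable {σ K : Type*} [Field K]

/-- The `2 × ι` matrix with rows `a` and `c` consists of linear forms and is `1`-generic: every
nonzero combination of its rows has linearly independent entries. Up to scaling, such a combination
is `a` or of the form `c - r a`. -/
structure IsOneGenericPencil {ι : Type*} (a c : ι → MvPolynomial σ K) : Prop where
  isHomogeneous_left (j : ι) : (a j).IsHomogeneous 1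
  isHomogeneous_right (j : ι) : (c j).IsHomogeneous 1
  linearIndependent_left : LinearIndependent K a
  linearIndependent_sub (r : K) : LinearIndependent K fun j => c j - C r * a j

variable {ι : Type*} {a c : ι → MvPolynomial σ K}

namespace IsOneGenericPencil

theorem isPermutableRegular_left (h : IsOneGenericPencil a c) : IsPermutableRegular a :=
  isPermutableRegular_of_linearIndependent h.isHomogeneous_left h.linearIndependent_left

theorem isPermutableRegular_sub (h : IsOneGenericPencil a c) (r : K) :
    IsPermutableRegular fun j => c j - C r * a j :=
  isPermutableRegular_of_linearIndependent (a := fun j => c j - C r * a j)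
    (fun j => (h.isHomogeneous_right j).sub ((h.isHomogeneous_left j).C_mul r))
    (h.linearIndependent_sub r)

theorem linearIndependent_right (h : IsOneGenericPencil a c) : LinearIndependent K c := by
  simpa using h.linearIndependent_sub 0

theorem left_notMem_minorIdeal (h : IsOneGenericPencil a c) (s : Set ι) (j : ι) :
    a j ∉ minorIdeal a c s := fun hmem =>
  h.linearIndependent_left.ne_zero j <|
    eq_zero_of_mem_minorIdeal h.isHomogeneous_left h.isHomogeneous_right (h.isHomogeneous_left j)
      hmem

theorem right_notMem_span_left (h : IsOneGenericPencil a c) (j : ι) : c j ∉ Ideal.span {a j} := by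
  intro hmem
  obtain ⟨r, hr⟩ := Submodule.mem_span_singleton.mp <| mem_span_of_mem_ideal_span
    (by simpa using h.isHomogeneous_left j) (h.isHomogeneous_right j) hmem
  exact (h.linearIndependent_sub r).ne_zero j (by rw [← hr, smul_eq_C_mul, sub_self])

section IsAlgClosed

variable [IsAlgClosed K]

theorem isSMulRegular_map_C (h : IsOneGenericPencil a c) (s : Finset ι) {p : Polynomial K}
    (hp : p ≠ 0) :
    IsSMulRegular (Polynomial (MvPolynomial σ K) ⧸ pencilIdeal a c s)
      (p.map (C : K →+* MvPolynomial σ K)) := by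
  induction IsAlgClosed.splits p using Submonoid.closure_induction with
  | mem p hmem =>
    rcases hmem with ⟨r, rfl⟩ | ⟨r, rfl⟩
    · have hr : r ≠ 0 := by simpa using hp
      rw [Polynomial.map_C]
      exact (((isUnit_iff_ne_zero.mpr hr).map _).map _).isSMulRegular _
    · simpa using isSMulRegular_X_sub_C (h.isPermutableRegular_sub (-r)) s
  | one => simp [IsSMulRegular.one]
  | mul p q _ _ ihp ihq =>
    rw [Polynomial.map_mul]
    exact (ihp (left_ne_zero_of_mul hp)).mul (ihq (right_ne_zero_of_mul hp))

theorem isPrime_pencilIdeal (h : IsOneGenericPencil a c) (s : Finset ι) :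
    (pencilIdeal a c s).IsPrime := by
  let e := exchangeEquiv σ K
  have hcomap : ((pencilIdeal a c s).map e).comap e = pencilIdeal a c s :=
    Ideal.comap_map_of_bijective e e.bijective
  have hmap : (pencilIdeal a c s).map e = Ideal.span (e '' (pencil a c '' s)) := Ideal.map_span _ _
  have hprime : ((pencilIdeal a c s).map e).IsPrime := by
    rw [hmap]
    refine isPrime_span_of_isHomogeneous_one_of_C_mul_mem ?_ fun p hp f hf => ?_
    · rintro _ ⟨_, ⟨j, -, rfl⟩, rfl⟩
      simp only [pencil, map_sub, map_mul, e, exchangeEquiv_C, exchangeEquiv_X]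
      exact ((h.isHomogeneous_right j).map _).sub (((h.isHomogeneous_left j).map _).C_mul _)
    · obtain ⟨g, rfl⟩ := e.surjective f
      rw [← hmap, ← exchangeEquiv_map_C, ← map_mul] at hf
      rw [← hmap]
      refine Ideal.mem_map_of_mem e (mem_of_isSMulRegular_quotient_of_smul_mem
        (h.isSMulRegular_map_C s hp) ?_)
      exact hcomap ▸ hf
  exact hcomap ▸ hprime.comap e

theorem isPrime_minorIdeal (h : IsOneGenericPencil a c) (s : Finset ι) :
    (minorIdeal a c s).IsPrime :=
  h.isPermutableRegular_left.comap_C_pencilIdeal s ▸ (h.isPrime_pencilIdeal s).comap Polynomial.C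

theorem minor_notMem_minorIdeal (h : IsOneGenericPencil a c) {s : Finset ι} {o k : ι} (ho : o ∈ s)
    (hk : k ∉ s) : a k * c o - c k * a o ∉ minorIdeal a c s := by
  intro hδ
  have hpencil : Polynomial.C (a o) * pencil a c k ∈ pencilIdeal a c s := by
    have hsyzygy : Polynomial.C (a o) * pencil a c k = Polynomial.C (a k) * pencil a c o -
        Polynomial.C (a k * c o - c k * a o) := by
      simp only [pencil, map_sub, map_mul]
      ring
    rw [hsyzygy]
    exact sub_mem (Ideal.mul_mem_left _ _ (pencil_mem_pencilIdeal ho))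
      (minorIdeal_le_comap_pencilIdeal _ hδ)
  rcases (h.isPrime_pencilIdeal s).mem_or_mem hpencil with hao | hk_mem
  · refine h.left_notMem_minorIdeal s o ?_
    rwa [← h.isPermutableRegular_left.comap_C_pencilIdeal]
  · refine notMem_ideal_span_image_of_linearIndependent h.isHomogeneous_right
      h.linearIndependent_right (s := s) hk ?_
    have heval : (pencilIdeal a c s).map (Polynomial.evalRingHom 0) = Ideal.span (c '' s) := by
      rw [pencilIdeal, Ideal.map_span, Set.image_image]
      simp [pencil]
    simpa [pencil, heval] using Ideal.mem_map_of_mem (Polynomial.evalRingHom 0) hk_mem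

end IsAlgClosed

end IsOneGenericPencil

end OneGenericPencil

section OneGenericProjectiveDimension

variable {σ K ι : Type*} [Field K] {a c : ι → MvPolynomial σ K}

namespace IsOneGenericPencil

theorem quotPdLE_columnIdeal_sup_span_left (h : IsOneGenericPencil a c) {o : ι} {s : Finset ι}
    (ho : o ∈ s) : QuotPdLE (columnIdeal a c o s ⊔ Ideal.span {a o}) s.card := by
  have hspan_left : QuotPdLE (Ideal.span {a o}) 1 := by
    simpa using h.isPermutableRegular_left.quotPdLE_span {o}
  have hprime : (Ideal.span {a o}).IsPrime :=
    isPrime_span_of_isHomogeneous_one (by simpa using h.isHomogeneous_left o)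
  have hco := h.right_notMem_span_left o
  rw [sup_comm, span_sup_columnIdeal]
  rcases eq_or_lt_of_le (Finset.one_le_card.mpr ⟨o, ho⟩) with hs | hs
  · have hle : Ideal.span (a '' s) ≤ Ideal.span {a o} := by
      obtain ⟨o', rfl⟩ := Finset.card_eq_one.mp hs.symm
      rw [Finset.mem_singleton.mp ho]
      simp
    rw [sup_eq_left.mpr (Ideal.mul_le_right.trans hle), ← hs]
    exact hspan_left
  · refine .sup_span_singleton_mul (fun f hf => ?_) (h.isPermutableRegular_left.quotPdLE_span s)
      ((hspan_left.sup_span_singleton (isSMulRegular_quotient_of_isPrime hprime hco)).mono hs)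
    exact Ideal.span_mono (Set.singleton_subset_iff.mpr (Set.mem_image_of_mem a ho))
      ((hprime.mem_or_mem hf).resolve_left hco)

variable [IsAlgClosed K]

theorem quotPdLE_minorIdeal (h : IsOneGenericPencil a c) {s : Finset ι} {n : ℕ}
    (hs : s.card ≤ n + 1) : QuotPdLE (minorIdeal a c s) n := by
  classical
  induction s using Finset.induction_on generalizing n with
  | empty => simpa [minorIdeal_of_subsingleton] using QuotPdLE.bot.mono n.zero_le
  | insert k s hk ih =>
    rw [Finset.card_insert_of_notMem hk] at hs
    rcases s.eq_empty_or_nonempty with rfl | ⟨o, ho⟩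
    · simpa [minorIdeal_of_subsingleton] using QuotPdLE.bot.mono n.zero_le
    · obtain ⟨n, rfl⟩ := Nat.exists_eq_add_of_le'
        ((Finset.one_le_card.mpr ⟨o, ho⟩).trans (Nat.le_of_succ_le_succ hs))
      rw [Finset.coe_insert]
      exact quotPdLE_minorIdeal_insert ho (h.isPrime_minorIdeal s) (h.left_notMem_minorIdeal s o)
        (h.minor_notMem_minorIdeal ho hk) (ih (by omega))
        ((h.isPermutableRegular_left.quotPdLE_span s).mono (by omega))

theorem quotPdLE_minorIdeal_sup_span_singleton (h : IsOneGenericPencil a c) {s : Finset ι} {n : ℕ}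
    (hs : s.card ≤ n + 1) (b : MvPolynomial σ K) :
    QuotPdLE (minorIdeal a c s ⊔ Ideal.span {b}) (n + 1) := by
  have hminor := h.quotPdLE_minorIdeal hs
  by_cases hb : b ∈ minorIdeal a c s
  · rw [sup_eq_left.mpr ((Ideal.span_singleton_le_iff_mem _).mpr hb)]
    exact hminor.mono n.le_succ
  · exact hminor.sup_span_singleton (isSMulRegular_quotient_of_isPrime (h.isPrime_minorIdeal s) hb)

theorem quotPdLE_columnIdeal_sup_span_mul (h : IsOneGenericPencil a c) {o : ι} {s : Finset ι}
    (ho : o ∈ s) (b : MvPolynomial σ K) :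
    QuotPdLE (columnIdeal a c o s ⊔ Ideal.span {a o * b}) s.card := by
  have hminors : columnIdeal a c o s ⊔ Ideal.span {a o} * (minorIdeal a c s ⊔ Ideal.span {b}) =
      columnIdeal a c o s ⊔ Ideal.span {a o * b} := by
    have hle := span_singleton_mul_minorIdeal_le (a := a) (c := c) (k := o) s
    rw [Ideal.mul_sup, ← sup_assoc, sup_eq_left.mpr hle, Ideal.span_singleton_mul_span_singleton]
  obtain ⟨n, hn⟩ := Nat.exists_eq_add_of_le' (Finset.one_le_card.mpr ⟨o, ho⟩)
  rw [← hminors]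
  refine .sup_span_singleton_mul (fun f hf => Ideal.mem_sup_left ?_)
    (hn ▸ h.quotPdLE_minorIdeal_sup_span_singleton hn.le b)
    (h.quotPdLE_columnIdeal_sup_span_left ho)
  exact ((h.isPrime_minorIdeal s).mem_or_mem (columnIdeal_le_minorIdeal ho hf)).resolve_left
    (h.left_notMem_minorIdeal s o)

end IsOneGenericPencil

end OneGenericProjectiveDimension

section RepresentedByMinors

theorem OneGeneric.linearIndependent {K R : Type*} [Field K] [CommRing R] [Algebra K R] {n : ℕ}
    {a c : Fin n → R} (h : OneGeneric K (Matrix.of ![a, c])) {w : Fin 2 → K} (hw : w ≠ 0) :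
    LinearIndependent K fun j => w 0 • a j + w 1 • c j := by
  refine Fintype.linearIndependent_iff.mpr fun g hg => congrFun (by_contra fun hne => ?_)
  refine h w g hw hne ?_
  rw [Fin.sum_univ_two, ← Finset.sum_add_distrib, ← hg]
  refine Finset.sum_congr rfl fun j _ => ?_
  simp only [Matrix.of_apply, Matrix.cons_val_zero, Matrix.cons_val_one, Algebra.smul_def, map_mul]
  ring

theorem OneGeneric.isOneGenericPencil {σ K : Type*} [Field K] {n : ℕ}
    {a c : Fin n → MvPolynomial σ K} (h : OneGeneric K (Matrix.of ![a, c]))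
    (ha : ∀ j, (a j).IsHomogeneous 1) (hc : ∀ j, (c j).IsHomogeneous 1) :
    IsOneGenericPencil a c where
  isHomogeneous_left := ha
  isHomogeneous_right := hc
  linearIndependent_left := by simpa using h.linearIndependent (w := ![1, 0]) (by simp)
  linearIndependent_sub r := by
    simpa [neg_add_eq_sub, smul_eq_C_mul] using h.linearIndependent (w := ![-r, 1]) (by simp)

theorem repByMinors_cons_zero_cons {R : Type*} [CommRing R] {n : ℕ} (x y b : R) (u v : Fin n → R) :
    repByMinors x y (Fin.cons 0 u) (Fin.cons b v) =
      columnIdeal (Fin.cons x u) (Fin.cons y v) 0 Set.univ ⊔ Ideal.span {x * b} := by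
  simp [repByMinors, columnIdeal, Fin.range_fin_succ, Fin.tail_def, Ideal.span_insert,
    mul_comm y x, sup_comm]

theorem stmt9_general {K σ : Type*} [Field K] [IsAlgClosed K] {m : ℕ}
    {x y : MvPolynomial σ K} (hx : x.IsHomogeneous 1) (hy : y.IsHomogeneous 1)
    (b : MvPolynomial σ K) {u v : Fin m → MvPolynomial σ K}
    (hu : ∀ j, (u j).IsHomogeneous 1) (hv : ∀ j, (v j).IsHomogeneous 1)
    (h1g : OneGeneric K (Matrix.of ![Fin.cons x u, Fin.cons y v] :
      Matrix (Fin 2) (Fin (m + 1)) (MvPolynomial σ K))) :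
    projDim (MvPolynomial σ K)
      (MvPolynomial σ K ⧸ repByMinors x y (Fin.cons 0 u) (Fin.cons b v)) ≤ ((m + 1 : ℕ) : ℕ∞) := by
  have hD : IsOneGenericPencil (Fin.cons x u) (Fin.cons y v) :=
    OneGeneric.isOneGenericPencil h1g (Fin.cases hx hu) (Fin.cases hy hv)
  have hpd := hD.quotPdLE_columnIdeal_sup_span_mul (Finset.mem_univ 0) b
  rw [Finset.coe_univ, Fin.cons_zero, ← repByMinors_cons_zero_cons, Finset.card_fin] at hpd
  exact projDim_le_of_hasProjectiveDimensionLE hpd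

end RepresentedByMinors

/-- with `n = m + 1`, if `I` is minimally generated by `n` quadrics and is
represented by minors by `M = [[x, 0, a₁₂, …, a₁ₙ], [y, a₂₁, a₂₂, …, a₂ₙ]]` (all entries
linear forms or zero, `x, y` linearly independent) whose submatrix `D` obtained by
deleting the second column is 1-generic, then `pd(R/I) ≤ n`. -/
theorem stmt9 (K : Type u) [Field K] [IsAlgClosed K] (N m : ℕ)
    (x y b : MvPolynomial (Fin N) K) (hx : x.IsHomogeneous 1) (hy : y.IsHomogeneous 1)
    (hb : b.IsHomogeneous 1)
    (hxy : LinearIndependent K ![x, y])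
    (u v : Fin m → MvPolynomial (Fin N) K)
    (hu : ∀ j, (u j).IsHomogeneous 1) (hv : ∀ j, (v j).IsHomogeneous 1)
    (I : Ideal (MvPolynomial (Fin N) K))
    (hI : I = repByMinors x y (Fin.cons 0 u) (Fin.cons b v))
    (hmin : ∀ (k : ℕ) (h : Fin k → MvPolynomial (Fin N) K),
      I = Ideal.span (Set.range h) → m + 1 ≤ k)
    (h1g : OneGeneric K (Matrix.of ![Fin.cons x u, Fin.cons y v] : Matrix (Fin 2) (Fin (m + 1)) (MvPolynomial (Fin N) K))) :
    projDim (MvPolynomial (Fin N) K) (MvPolynomial (Fin N) K ⧸ I) ≤ ((m + 1 : ℕ) : ℕ∞) := by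
  subst hI
  exact stmt9_general hx hy b hu hv h1g
end
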